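/- arXiv:1603.04246 — 3 statements merged into one kernel-verified Lean document; each statement's English description precedes it below -/
import Mathlib

section
/- For every r ≥ 0 with r ≠ 0 and r ≠ √2, a(r) = 4i · sin²(πr²/2) · ( 36/(π³(r²−2)) − 8640/(π³r⁴) + 18144/(π³r²) + ∫_{0}^{∞} ( t² φ0(i/t) − (36/π²) e^{2πt} + (8640/π) t − 18144/π² ) e^{−πr²t} dt ), and the integral converges absolutely for all r ≥ 0. -/
open MeasureTheory

/-- Weight 2 Eisenstein series (quasimodular), via its `q`-expansion. -/
noncomputable def E2 (z : ℂ) : ℂ :=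
  1 - 24 * ∑' n : ℕ+, ((ArithmeticFunction.sigma 1 n : ℕ) : ℂ) *
    Complex.exp (2 * (Real.pi : ℂ) * Complex.I * n * z)

/-- Weight 4 Eisenstein series, via its `q`-expansion. -/
noncomputable def E4 (z : ℂ) : ℂ :=
  1 + 240 * ∑' n : ℕ+, ((ArithmeticFunction.sigma 3 n : ℕ) : ℂ) *
    Complex.exp (2 * (Real.pi : ℂ) * Complex.I * n * z)

/-- Weight 6 Eisenstein series, via its `q`-expansion. -/
noncomputable def E6 (z : ℂ) : ℂ :=
  1 - 504 * ∑' n : ℕ+, ((ArithmeticFunction.sigma 5 n : ℕ) : ℂ) *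
    Complex.exp (2 * (Real.pi : ℂ) * Complex.I * n * z)

/-- The elliptic `j`-invariant. -/
noncomputable def jInv (z : ℂ) : ℂ := 1728 * E4 z ^ 3 / (E4 z ^ 3 - E6 z ^ 2)

/-- The weakly holomorphic modular form `varphi_{-2}`. -/
noncomputable def varphim2 (z : ℂ) : ℂ := -1728 * E4 z * E6 z / (E4 z ^ 3 - E6 z ^ 2)

/-- The weakly holomorphic modular form `varphi_{-4}`. -/
noncomputable def varphim4 (z : ℂ) : ℂ := 1728 * E4 z ^ 2 / (E4 z ^ 3 - E6 z ^ 2)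

/-- `φ_{-4} = varphi_{-4}`. -/
noncomputable def phim4 (z : ℂ) : ℂ := varphim4 z

/-- `φ_{-2} = varphi_{-4}·E2 + varphi_{-2}`. -/
noncomputable def phim2 (z : ℂ) : ℂ := varphim4 z * E2 z + varphim2 z

/-- `φ_0 = varphi_{-4}·E2² + 2·varphi_{-2}·E2 + j − 1728`. -/
noncomputable def phi0 (z : ℂ) : ℂ :=
  varphim4 z * E2 z ^ 2 + 2 * varphim2 z * E2 z + jInv z - 1728
/-- Contour integral of `F` along the straight-line segment from `z₁` to `z₂`. -/
noncomputable def segInt (z₁ z₂ : ℂ) (F : ℂ → ℂ) : ℂ :=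
  (z₂ - z₁) * ∫ t in (0:ℝ)..1, F (z₁ + (t : ℂ) * (z₂ - z₁))

/-- Contour integral of `F` along the vertical ray from `c·i` to `i∞`. -/
noncomputable def rayIntFrom (c : ℝ) (F : ℂ → ℂ) : ℂ :=
  Complex.I * ∫ t in Set.Ioi c, F (Complex.I * (t : ℂ))
/-- The radial profile of the `+1`-eigenfunction `a`: the value of `a` on vectors of norm `r`. -/
noncomputable def aRad (r : ℝ) : ℂ :=
  segInt (-1) Complex.I
      (fun z => phi0 (-1/(z+1)) * (z+1)^2 * Complex.exp ((Real.pi:ℂ) * Complex.I * (r:ℂ)^2 * z))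
    + segInt 1 Complex.I
      (fun z => phi0 (-1/(z-1)) * (z-1)^2 * Complex.exp ((Real.pi:ℂ) * Complex.I * (r:ℂ)^2 * z))
    - 2 * segInt 0 Complex.I
      (fun z => phi0 (-1/z) * z^2 * Complex.exp ((Real.pi:ℂ) * Complex.I * (r:ℂ)^2 * z))
    + 2 * rayIntFrom 1 (fun z => phi0 z * Complex.exp ((Real.pi:ℂ) * Complex.I * (r:ℂ)^2 * z))

/-- The radial function `a : ℝ⁸ → ℂ`. -/
noncomputable def aFn (x : EuclideanSpace ℝ (Fin 8)) : ℂ := aRad ‖x‖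

open Filter Topology Asymptotics
open UpperHalfPlane hiding I
namespace Via

lemma E2_coe (z : ℍ) : E2 (z : ℂ) = EisensteinSeries.E2 z := by
  rw [EisensteinSeries.E2_eq_tsum_cexp, E2]
  congr 3
  ext n
  congr 1
  rw [← Complex.exp_nat_mul]
  congr 1
  ring

lemma E4_coe (z : ℍ) : E4 (z : ℂ) = ModularForm.E₄ z := by
  rw [EisensteinSeries.q_expansion_bernoulli (by norm_num) (by decide), E4]
  have h : bernoulli 4 = -1/30 := by
    decide +kernel
  rw [h]
  have : ∀ n : ℕ+, Complex.exp (2 * (Real.pi : ℂ) * Complex.I * n * z) = Complex.exp (2 * (Real.pi : ℂ) * Complex.I * z) ^ (n : ℤ) := by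
    intro n
    rw [zpow_natCast, ← Complex.exp_nat_mul]
    congr 1
    ring
  simp only [this]
  push_cast
  norm_num

lemma E6_coe (z : ℍ) : E6 (z : ℂ) = ModularForm.E₆ z := by
  rw [EisensteinSeries.q_expansion_bernoulli (by norm_num) (by decide), E6]
  have h : bernoulli 6 = 1/42 := by
    decide +kernel
  rw [h]
  have : ∀ n : ℕ+, Complex.exp (2 * (Real.pi : ℂ) * Complex.I * n * z) = Complex.exp (2 * (Real.pi : ℂ) * Complex.I * z) ^ (n : ℤ) := by
    intro n
    rw [zpow_natCast, ← Complex.exp_nat_mul]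
    congr 1
    ring
  simp only [this]
  push_cast
  norm_num

lemma disc_ne {z : ℂ} (hz : 0 < z.im) : E4 z ^ 3 - E6 z ^ 2 ≠ 0 := by
  lift z to ℍ using hz
  rw [E4_coe, E6_coe]
  have h := ModularForm.discriminant_eq_E₄_cube_sub_E₆_sq z
  have h2 := ModularForm.discriminant_ne_zero z
  intro h3
  rw [h3] at h
  simp at h
  exact h2 h

lemma E2_S {z : ℂ} (hz : 0 < z.im) : E2 (-1/z) = z ^ 2 * E2 z - 6 * Complex.I * z / Real.pi := by
  lift z to ℍ using hz
  have h := congrFun (EisensteinSeries.E2_slash_action ModularGroup.S) z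
  have hS : ((ModularGroup.S • z : ℍ) : ℂ) = -1 / z := by
    rw [UpperHalfPlane.modular_S_smul]; simp [neg_div]
  rw [← hS, E2_coe, E2_coe]
  simp only [Pi.sub_apply, Pi.smul_apply, EisensteinSeries.D2_S] at h
  rw [ModularForm.SL_slash_apply] at h
  simp [ModularGroup.denom_S, riemannZeta_two] at h
  have hz := z.ne_zero
  have hp : (Real.pi : ℂ) ≠ 0 := by exact_mod_cast Real.pi_ne_zero
  field_simp at h ⊢
  rw [mul_comm]
  exact h

lemma S_mem : (ModularGroup.S : GL (Fin 2) ℝ) ∈ (Matrix.SpecialLinearGroup.mapGL ℝ : Matrix.SpecialLinearGroup (Fin 2) ℤ →* GL (Fin 2) ℝ).range :=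
  MonoidHom.mem_range.2 ⟨ModularGroup.S, rfl⟩

lemma E4_S {z : ℂ} (hz : 0 < z.im) : E4 (-1/z) = z ^ 4 * E4 z := by
  lift z to ℍ using hz
  have hS : ((ModularGroup.S • z : ℍ) : ℂ) = -1 / z := by
    rw [UpperHalfPlane.modular_S_smul]; simp [neg_div]
  rw [← hS, E4_coe, E4_coe]
  have := SlashInvariantForm.slash_action_eqn'' ModularForm.E₄
    (γ := (ModularGroup.S : GL (Fin 2) ℝ)) S_mem z
  simp [ModularGroup.denom_S] at this
  exact this

lemma E6_S {z : ℂ} (hz : 0 < z.im) : E6 (-1/z) = z ^ 6 * E6 z := by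
  lift z to ℍ using hz
  have hS : ((ModularGroup.S • z : ℍ) : ℂ) = -1 / z := by
    rw [UpperHalfPlane.modular_S_smul]; simp [neg_div]
  rw [← hS, E6_coe, E6_coe]
  have := SlashInvariantForm.slash_action_eqn'' ModularForm.E₆
    (γ := (ModularGroup.S : GL (Fin 2) ℝ)) S_mem z
  simp [ModularGroup.denom_S] at this
  exact this

lemma exp_per (n : ℕ+) (z : ℂ) : Complex.exp (2 * (Real.pi : ℂ) * Complex.I * n * (z + 1)) =
    Complex.exp (2 * (Real.pi : ℂ) * Complex.I * n * z) := by
  rw [Complex.exp_eq_exp_iff_exists_int]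
  exact ⟨n, by push_cast; ring⟩

lemma E2_T (z : ℂ) : E2 (z + 1) = E2 z := by simp only [E2, exp_per]
lemma E4_T (z : ℂ) : E4 (z + 1) = E4 z := by simp only [E4, exp_per]
lemma E6_T (z : ℂ) : E6 (z + 1) = E6 z := by simp only [E6, exp_per]

lemma E2_diff {z : ℂ} (hz : 0 < z.im) : DifferentiableAt ℂ E2 z := by
  have h := UpperHalfPlane.mdifferentiable_iff.1 _root_.E2_mdifferentiable
  have h1 := (h z hz).differentiableAt (isOpen_upperHalfPlaneSet.mem_nhds hz)
  refine h1.congr_of_eventuallyEq ?_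
  filter_upwards [isOpen_upperHalfPlaneSet.mem_nhds hz] with w hw
  simp [UpperHalfPlane.ofComplex_apply_of_im_pos hw, ← E2_coe]

lemma E4_diff {z : ℂ} (hz : 0 < z.im) : DifferentiableAt ℂ E4 z := by
  have h := UpperHalfPlane.mdifferentiable_iff.1 ModularForm.E₄.holo'
  have h1 := (h z hz).differentiableAt (isOpen_upperHalfPlaneSet.mem_nhds hz)
  refine h1.congr_of_eventuallyEq ?_
  filter_upwards [isOpen_upperHalfPlaneSet.mem_nhds hz] with w hw
  simp [UpperHalfPlane.ofComplex_apply_of_im_pos hw]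
  exact E4_coe ⟨w, hw⟩

lemma E6_diff {z : ℂ} (hz : 0 < z.im) : DifferentiableAt ℂ E6 z := by
  have h := UpperHalfPlane.mdifferentiable_iff.1 ModularForm.E₆.holo'
  have h1 := (h z hz).differentiableAt (isOpen_upperHalfPlaneSet.mem_nhds hz)
  refine h1.congr_of_eventuallyEq ?_
  filter_upwards [isOpen_upperHalfPlaneSet.mem_nhds hz] with w hw
  simp [UpperHalfPlane.ofComplex_apply_of_im_pos hw]
  exact E6_coe ⟨w, hw⟩

lemma phi0_diff {z : ℂ} (hz : 0 < z.im) : DifferentiableAt ℂ phi0 z := by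
  have h2 := E2_diff hz
  have h4 := E4_diff hz
  have h6 := E6_diff hz
  have hd := disc_ne hz
  unfold phi0 varphim4 varphim2 jInv
  fun_prop (disch := assumption)

lemma phi0_S {z : ℂ} (hz : 0 < z.im) : phi0 (-1/z) * z ^ 2 = z ^ 2 * phi0 z
    - 12 * Complex.I / Real.pi * z * phim2 z - 36 / Real.pi ^ 2 * phim4 z := by
  have hd := disc_ne hz
  have hz0 : z ≠ 0 := by rintro rfl; simp at hz
  have hp : (Real.pi : ℂ) ≠ 0 := by exact_mod_cast Real.pi_ne_zero
  have hd' : (z^4 * E4 z) ^ 3 - (z^6 * E6 z) ^ 2 = z ^ 12 * (E4 z ^ 3 - E6 z ^ 2) := by ring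
  simp only [phi0, phim2, phim4, varphim4, varphim2, jInv, E2_S hz, E4_S hz, E6_S hz, hd']
  have hI : Complex.I ^ 2 = -1 := Complex.I_sq
  generalize E4 z = a at *
  generalize E6 z = b at *
  generalize E2 z = c at *
  obtain ⟨d, hdd⟩ : ∃ d, d = a ^ 3 - b ^ 2 := ⟨_, rfl⟩
  rw [← hdd] at hd ⊢
  field_simp
  ring_nf
  simp only [hI]
  ring

lemma phi0_T (z : ℂ) : phi0 (z + 1) = phi0 z := by
  simp only [phi0, varphim4, varphim2, jInv, E2_T, E4_T, E6_T]
lemma phim2_T (z : ℂ) : phim2 (z + 1) = phim2 z := by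
  simp only [phim2, varphim4, varphim2, E2_T, E4_T, E6_T]
lemma phim4_T (z : ℂ) : phim4 (z + 1) = phim4 z := by
  simp only [phim4, varphim4, E4_T, E6_T]

noncomputable def qq (z : ℂ) : ℂ := Complex.exp (2 * (Real.pi : ℂ) * Complex.I * z)

noncomputable def uu (k : ℕ) (q : ℂ) : ℂ :=
  ∑' n : ℕ, ((ArithmeticFunction.sigma k (n + 3) : ℕ) : ℂ) * q ^ n

lemma uu_bd (k n : ℕ) {q : ℂ} (hq : ‖q‖ ≤ 1/2) :
    ‖((ArithmeticFunction.sigma k (n + 3) : ℕ) : ℂ) * q ^ n‖ ≤ 8 * (((n + 3 : ℕ) : ℝ) ^ (k + 1) * (1/2) ^ (n + 3)) := by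
  rw [norm_mul, norm_pow, Complex.norm_natCast]
  have h1 : ((ArithmeticFunction.sigma k (n + 3) : ℕ) : ℝ) ≤ ((n + 3 : ℕ) : ℝ) ^ (k + 1) := by
    exact_mod_cast ArithmeticFunction.sigma_le_pow_succ k (n + 3)
  calc _ ≤ ((n + 3 : ℕ) : ℝ) ^ (k + 1) * (1/2) ^ n := by gcongr
    _ = _ := by ring

lemma uu_summ_bd (k : ℕ) : Summable fun n : ℕ => 8 * (((n + 3 : ℕ) : ℝ) ^ (k + 1) * (1/2) ^ (n + 3)) := by
  apply Summable.mul_left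
  have := summable_pow_mul_geometric_of_norm_lt_one (R := ℝ) (k + 1) (r := 1/2) (by norm_num)
  exact (summable_nat_add_iff 3).2 this

lemma uu_cont (k : ℕ) : ContinuousAt (uu k) 0 := by
  have : ContinuousOn (uu k) (Metric.closedBall 0 (1/2)) := by
    refine continuousOn_tsum (fun n => by fun_prop) (uu_summ_bd k) ?_
    intro n q hq
    exact uu_bd k n (by simpa using hq)
  exact this.continuousAt (Metric.closedBall_mem_nhds _ (by norm_num))

lemma tsum_eq (k : ℕ) {z : ℂ} (hz : ‖qq z‖ ≤ 1/2) :
    ∑' n : ℕ+, ((ArithmeticFunction.sigma k n : ℕ) : ℂ) *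
      Complex.exp (2 * (Real.pi : ℂ) * Complex.I * n * z) =
    qq z + (1 + 2 ^ k) * qq z ^ 2 + qq z ^ 3 * uu k (qq z) := by
  have h1 : ∀ n : ℕ+, ((ArithmeticFunction.sigma k n : ℕ) : ℂ) *
      Complex.exp (2 * (Real.pi : ℂ) * Complex.I * n * z) = (fun n : ℕ => ((ArithmeticFunction.sigma k n : ℕ) : ℂ) *
      qq z ^ n) n := by
    intro n
    simp only [qq, ← Complex.exp_nat_mul]
    congr 2; ring
  simp only [h1]
  rw [tsum_pnat_eq_tsum_succ (f := fun n : ℕ => ((ArithmeticFunction.sigma k n : ℕ) : ℂ) * qq z ^ n)]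
  have hs : Summable fun n : ℕ => ((ArithmeticFunction.sigma k (n + 3) : ℕ) : ℂ) * qq z ^ n :=
    Summable.of_norm_bounded (uu_summ_bd k) (fun n => uu_bd k n hz)
  have hs2 : Summable fun n : ℕ => ((ArithmeticFunction.sigma k (n + 1) : ℕ) : ℂ) * qq z ^ (n + 1) := by
    rw [← summable_nat_add_iff 2]
    refine (hs.mul_left (qq z ^ 3)).congr (fun n => ?_)
    ring
  rw [← hs2.sum_add_tsum_nat_add 2, uu, ← tsum_mul_left]
  congr 1
  · have : ArithmeticFunction.sigma k 2 = 1 + 2 ^ k := by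
      rw [ArithmeticFunction.sigma_apply, Nat.Prime.divisors Nat.prime_two]; simp
    simp [Finset.sum_range_succ, this]
  · congr 1; ext n; ring


lemma norm_qq (z : ℂ) : ‖qq z‖ = Real.exp (-(2 * Real.pi * z.im)) := by
  rw [qq, Complex.norm_exp]; congr 1; simp

lemma E4_q {z : ℂ} (hz : ‖qq z‖ ≤ 1/2) :
    E4 z = 1 + 240 * qq z + 2160 * qq z ^ 2 + 240 * qq z ^ 3 * uu 3 (qq z) := by
  rw [E4, tsum_eq 3 hz]; ring
lemma E6_q {z : ℂ} (hz : ‖qq z‖ ≤ 1/2) :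
    E6 z = 1 - 504 * qq z - 16632 * qq z ^ 2 - 504 * qq z ^ 3 * uu 5 (qq z) := by
  rw [E6, tsum_eq 5 hz]; ring
lemma E2_q {z : ℂ} (hz : ‖qq z‖ ≤ 1/2) :
    E2 z = 1 - 24 * qq z - 72 * qq z ^ 2 - 24 * qq z ^ 3 * uu 1 (qq z) := by
  rw [E2, tsum_eq 1 hz]; ring

noncomputable def dP (q u v : ℂ) : ℂ := (98) + (7/12)*v^1 + (5/12)*u^1 + (64017)*q^1 + (-294)*q^1*v^1 + (200)*q^1*u^1 + (1944000)*q^2 + (-9702)*q^2*v^1 + (25800)*q^2*u^1 + (5832000)*q^3 + (-147)*q^3*v^2 + (432000)*q^3*u^1 + (100)*q^3*u^2 + (1944000)*q^4*u^1 + (24000)*q^4*u^2 + (216000)*q^5*u^2 + (8000)*q^6*u^3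

noncomputable def kP (q u v : ℂ) : ℂ := 1 - 24 * q + q ^ 2 * dP q u v

noncomputable def n4P (q u v : ℂ) : ℂ := (73918) + (-7/12)*v^1 + (-5/12)*u^1 + (923391)*q^1 + (70)*q^1*u^1 + (-29542968)*q^2 + (157878)*q^2*v^1 + (-11400)*q^2*u^1 + (-985608000)*q^3 + (4889808)*q^3*v^1 + (147)*q^3*v^2 + (-12398400)*q^3*u^1 + (-100)*q^3*u^2 + (-2939328000)*q^4 + (74088)*q^4*v^2 + (-219672000)*q^4*u^1 + (-16800)*q^4*u^2 + (-979776000)*q^5*u^1 + (-12312000)*q^5*u^2 + (-108864000)*q^6*u^2 + (-8000)*q^6*u^3 + (-4032000)*q^7*u^3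

noncomputable def mP (q u v w : ℂ) : ℂ := (720) + (12960)*q^1 + (-69120)*q^2 + (-24)*q^2*w^1 + (504)*q^2*v^1 + (240)*q^2*u^1 + (-155520)*q^3 + (-5760)*q^3*w^1 + (-5760)*q^3*u^1 + (-51840)*q^4*w^1 + (-17280)*q^4*u^1 + (-5760)*q^5*u^1*w^1

noncomputable def n2P (q u v w : ℂ) : ℂ := (203040) + (4525920)*q^1 + (-24)*q^1*w^1 + (84)*q^1*v^1 + (-60)*q^1*u^1 + (-34842960)*q^2 + (-11520)*q^2*w^1 + (332640)*q^2*v^1 + (80640)*q^2*u^1 + (-1586304000)*q^3 + (-1486080)*q^3*w^1 + (8074080)*q^3*v^1 + (-16346880)*q^3*u^1 + (-4534963200)*q^4 + (-24883200)*q^4*w^1 + (105840)*q^4*v^2 + (-344217600)*q^4*u^1 + (-11520)*q^4*u^1*w^1 + (120960)*q^4*u^1*v^1 + (-14400)*q^4*u^2 + (-111974400)*q^5*w^1 + (-1474329600)*q^5*u^1 + (-2764800)*q^5*u^1*w^1 + (-18662400)*q^5*u^2 + (-24883200)*q^6*u^1*w^1 + (-159667200)*q^6*u^2 + (-1382400)*q^7*u^2*w^1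 + (-5760000)*q^7*u^3

lemma disc_q {z : ℂ} (hz : ‖qq z‖ ≤ 1/2) :
    E4 z ^ 3 - E6 z ^ 2 = 1728 * qq z * kP (qq z) (uu 3 (qq z)) (uu 5 (qq z)) := by
  rw [E4_q hz, E6_q hz, kP, dP]; ring

lemma qq_ne (z : ℂ) : qq z ≠ 0 := Complex.exp_ne_zero _

lemma kP_ne {z : ℂ} (h : 0 < z.im) (hz : ‖qq z‖ ≤ 1/2) :
    kP (qq z) (uu 3 (qq z)) (uu 5 (qq z)) ≠ 0 := by
  intro h0
  apply disc_ne h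
  rw [disc_q hz, h0, mul_zero]

lemma phim4_q {z : ℂ} (h : 0 < z.im) (hz : ‖qq z‖ ≤ 1/2) :
    phim4 z - (qq z)⁻¹ - 504 = qq z * (n4P (qq z) (uu 3 (qq z)) (uu 5 (qq z)) /
      kP (qq z) (uu 3 (qq z)) (uu 5 (qq z))) := by
  have hk := kP_ne h hz
  have hq := qq_ne z
  rw [phim4, varphim4, disc_q hz]
  have key : E4 z ^ 2 - (1 + 504 * qq z) * kP (qq z) (uu 3 (qq z)) (uu 5 (qq z)) =
    qq z ^ 2 * n4P (qq z) (uu 3 (qq z)) (uu 5 (qq z)) := by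
    rw [E4_q hz, kP, dP, n4P]; ring
  generalize kP (qq z) (uu 3 (qq z)) (uu 5 (qq z)) = k at *
  field_simp
  linear_combination key

lemma m_q {z : ℂ} (hz : ‖qq z‖ ≤ 1/2) :
    E4 z * E2 z - E6 z = qq z * mP (qq z) (uu 3 (qq z)) (uu 5 (qq z)) (uu 1 (qq z)) := by
  rw [E4_q hz, E6_q hz, E2_q hz, mP]; ring

lemma phim2_q {z : ℂ} (h : 0 < z.im) (hz : ‖qq z‖ ≤ 1/2) :
    phim2 z - 720 = qq z * (n2P (qq z) (uu 3 (qq z)) (uu 5 (qq z)) (uu 1 (qq z)) /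
      kP (qq z) (uu 3 (qq z)) (uu 5 (qq z))) := by
  have hk := kP_ne h hz
  have hq := qq_ne z
  have key : E4 z * mP (qq z) (uu 3 (qq z)) (uu 5 (qq z)) (uu 1 (qq z))
      - 720 * kP (qq z) (uu 3 (qq z)) (uu 5 (qq z)) =
    qq z * n2P (qq z) (uu 3 (qq z)) (uu 5 (qq z)) (uu 1 (qq z)) := by
    rw [E4_q hz, kP, dP, mP, n2P]; ring
  have hm := m_q hz
  rw [phim2, varphim4, varphim2, disc_q hz]
  generalize kP (qq z) (uu 3 (qq z)) (uu 5 (qq z)) = k at *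
  field_simp
  linear_combination qq z * key + E4 z * hm

lemma phi0_q {z : ℂ} (h : 0 < z.im) (hz : ‖qq z‖ ≤ 1/2) :
    phi0 z = qq z * (mP (qq z) (uu 3 (qq z)) (uu 5 (qq z)) (uu 1 (qq z)) ^ 2 /
      kP (qq z) (uu 3 (qq z)) (uu 5 (qq z))) := by
  have hk := kP_ne h hz
  have hq := qq_ne z
  have hm := m_q hz
  have hd := disc_ne h
  have e : phi0 z = 1728 * (E4 z * E2 z - E6 z) ^ 2 / (E4 z ^ 3 - E6 z ^ 2) := by
    rw [phi0, varphim4, varphim2, jInv]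
    field_simp
    ring
  rw [e, disc_q hz, hm]
  generalize kP (qq z) (uu 3 (qq z)) (uu 5 (qq z)) = k at *
  field_simp

lemma bdd_of_cont {g : ℂ → ℂ} (hg : ContinuousAt g 0) :
    ∃ C > 0, ∃ δ > 0, ∀ q, ‖q‖ < δ → ‖g q‖ ≤ C := by
  have h1 : ∀ᶠ q in 𝓝 (0:ℂ), ‖g q‖ < ‖g 0‖ + 1 := hg.norm.eventually_lt_const (by linarith)
  obtain ⟨δ, hδ, h⟩ := Metric.eventually_nhds_iff.1 h1
  exact ⟨‖g 0‖ + 1, by positivity, δ, hδ, fun q hq => (h (by simpa using hq)).le⟩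

lemma qq_small (δ : ℝ) (hδ : 0 < δ) : ∃ Y : ℝ, ∀ z : ℂ, Y ≤ z.im → ‖qq z‖ < δ := by
  have h : Tendsto (fun y : ℝ => Real.exp (-(2 * Real.pi * y))) atTop (𝓝 0) := by
    apply Real.tendsto_exp_neg_atTop_nhds_zero.comp
    exact tendsto_id.const_mul_atTop (by positivity)
  obtain ⟨Y, hY⟩ := eventually_atTop.1 (h.eventually_lt_const hδ)
  exact ⟨Y, fun z hz => by rw [norm_qq]; exact hY _ hz⟩

lemma asym : ∃ C > 0, ∃ Y ≥ 1, ∀ z : ℂ, Y ≤ z.im →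
    ‖phi0 z‖ ≤ C * ‖qq z‖ ∧ ‖phim2 z - 720‖ ≤ C * ‖qq z‖ ∧
      ‖phim4 z - (qq z)⁻¹ - 504‖ ≤ C * ‖qq z‖ := by
  have c1 := uu_cont 1
  have c3 := uu_cont 3
  have c5 := uu_cont 5
  have hk : ContinuousAt (fun q => kP q (uu 3 q) (uu 5 q)) 0 := by
    unfold kP dP; fun_prop
  have hk0 : kP 0 (uu 3 0) (uu 5 0) ≠ 0 := by simp [kP]
  have hm : ContinuousAt (fun q => mP q (uu 3 q) (uu 5 q) (uu 1 q)) 0 := by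
    unfold mP; fun_prop
  have hn2 : ContinuousAt (fun q => n2P q (uu 3 q) (uu 5 q) (uu 1 q)) 0 := by
    unfold n2P; fun_prop
  have hn4 : ContinuousAt (fun q => n4P q (uu 3 q) (uu 5 q)) 0 := by
    unfold n4P; fun_prop
  obtain ⟨C0, hC0, δ0, hδ0, h0⟩ := bdd_of_cont ((hm.pow 2).div hk hk0)
  obtain ⟨C2, hC2, δ2, hδ2, h2⟩ := bdd_of_cont (hn2.div hk hk0)
  obtain ⟨C4, hC4, δ4, hδ4, h4⟩ := bdd_of_cont (hn4.div hk hk0)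
  obtain ⟨Y0, hY0⟩ := qq_small δ0 hδ0
  obtain ⟨Y2, hY2⟩ := qq_small δ2 hδ2
  obtain ⟨Y4, hY4⟩ := qq_small δ4 hδ4
  obtain ⟨Yh, hYh⟩ := qq_small (1/2) (by norm_num)
  refine ⟨C0 + C2 + C4, by positivity, 1 + |Y0| + |Y2| + |Y4| + |Yh|, ?_, ?_⟩
  · have := abs_nonneg Y0; have := abs_nonneg Y2; have := abs_nonneg Y4; have := abs_nonneg Yh
    linarith
  intro z hz
  have := abs_nonneg Y0; have := abs_nonneg Y2; have := abs_nonneg Y4; have := abs_nonneg Yh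
  have := le_abs_self Y0; have := le_abs_self Y2; have := le_abs_self Y4; have := le_abs_self Yh
  have him : 0 < z.im := by linarith
  have hq := (hYh z (by linarith)).le
  rw [phi0_q him hq, phim2_q him hq, phim4_q him hq]
  have a0 := h0 _ (hY0 z (by linarith))
  have a2 := h2 _ (hY2 z (by linarith))
  have a4 := h4 _ (hY4 z (by linarith))
  refine ⟨?_, ?_, ?_⟩ <;> rw [norm_mul, mul_comm] <;> gcongr
  · exact a0.trans (by linarith)
  · exact a2.trans (by linarith)
  · exact a4.trans (by linarith)

noncomputable def FF (z : ℂ) : ℂ := phi0 (-1/z) * z ^ 2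
noncomputable def QQ (z : ℂ) : ℂ := -(36 / (Real.pi : ℂ) ^ 2) * Complex.exp (-2 * Real.pi * Complex.I * z)
  - 8640 * Complex.I / Real.pi * z - 18144 / (Real.pi : ℂ) ^ 2
noncomputable def RR (z : ℂ) : ℂ := FF z - QQ z

lemma RR_eq {z : ℂ} (hz : 0 < z.im) : RR z = z ^ 2 * phi0 z
    - 12 * Complex.I / Real.pi * z * (phim2 z - 720)
    - 36 / Real.pi ^ 2 * (phim4 z - (qq z)⁻¹ - 504) := by
  have : (qq z)⁻¹ = Complex.exp (-2 * Real.pi * Complex.I * z) := by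
    rw [qq, ← Complex.exp_neg]; congr 1; ring
  rw [RR, FF, QQ, phi0_S hz, this]
  ring

lemma RR_bd : ∃ C > 0, ∃ Y ≥ 1, ∀ z : ℂ, |z.re| ≤ 1 → Y ≤ z.im →
    ‖RR z‖ ≤ C * Real.exp (-z.im) ∧ ‖phi0 z‖ ≤ C * Real.exp (-z.im) := by
  obtain ⟨C, hC, Y, hY, h⟩ := asym
  refine ⟨100 * C, by positivity, Y, hY, ?_⟩
  intro z hre him
  obtain ⟨h0, h2, h4⟩ := h z him
  set y := z.im with hy
  have hy1 : 1 ≤ y := hY.le.trans him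
  have hz : ‖z‖ ≤ 2 * y := by
    have := Complex.norm_le_abs_re_add_abs_im z
    rw [← hy, abs_of_pos (by linarith : 0 < y)] at this
    linarith
  have hpi := Real.pi_gt_three
  have hq : y ^ 2 * ‖qq z‖ ≤ 2 * Real.exp (-y) := by
    rw [norm_qq]
    have e1 : y ^ 2 ≤ 2 * Real.exp y := by
      have := Real.quadratic_le_exp_of_nonneg (by linarith : 0 ≤ y)
      nlinarith
    calc y ^ 2 * Real.exp (-(2 * Real.pi * y)) ≤ 2 * Real.exp y * Real.exp (-(2 * y)) := by
          gcongr; linarith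
      _ = 2 * Real.exp (-y) := by rw [mul_assoc, ← Real.exp_add]; congr 2; ring
  have hqn : 0 ≤ ‖qq z‖ := norm_nonneg _
  have hq1 : ‖qq z‖ ≤ y ^ 2 * ‖qq z‖ := le_mul_of_one_le_left hqn (one_le_pow₀ hy1)
  have hqy : y * ‖qq z‖ ≤ y ^ 2 * ‖qq z‖ := by nlinarith [mul_nonneg (by linarith : 0 ≤ y - 1) (mul_nonneg (by linarith : 0 ≤ y) hqn)]
  constructor
  · rw [RR_eq (by linarith : 0 < z.im)]
    have b1 : ‖z ^ 2 * phi0 z‖ ≤ 4 * C * (y ^ 2 * ‖qq z‖) := by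
      rw [norm_mul, norm_pow]
      calc ‖z‖ ^ 2 * ‖phi0 z‖ ≤ (2 * y) ^ 2 * (C * ‖qq z‖) := by gcongr
        _ = _ := by ring
    have b2 : ‖12 * Complex.I / Real.pi * z * (phim2 z - 720)‖ ≤ 8 * C * (y ^ 2 * ‖qq z‖) := by
      rw [norm_mul, norm_mul]
      have : ‖12 * Complex.I / (Real.pi:ℂ)‖ ≤ 4 := by
        simp [abs_of_pos Real.pi_pos]
        rw [div_le_iff₀ Real.pi_pos]; linarith
      calc _ ≤ 4 * (2 * y) * (C * ‖qq z‖) := by gcongr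
        _ = 8 * C * (y * ‖qq z‖) := by ring
        _ ≤ _ := by gcongr
    have b3 : ‖36 / (Real.pi:ℂ) ^ 2 * (phim4 z - (qq z)⁻¹ - 504)‖ ≤ 4 * C * (y ^ 2 * ‖qq z‖) := by
      rw [norm_mul]
      have : ‖36 / (Real.pi:ℂ) ^ 2‖ ≤ 4 := by
        simp [abs_of_pos Real.pi_pos]
        rw [div_le_iff₀ (by positivity)]; nlinarith
      calc _ ≤ 4 * (C * ‖qq z‖) := by gcongr
        _ = 4 * C * ‖qq z‖ := by ring
        _ ≤ _ := by gcongr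
    calc _ ≤ 4 * C * (y ^ 2 * ‖qq z‖) + 8 * C * (y ^ 2 * ‖qq z‖) + 4 * C * (y ^ 2 * ‖qq z‖) := by
          refine (norm_sub_le _ _).trans (add_le_add ((norm_sub_le _ _).trans (add_le_add b1 b2)) b3)
      _ = 16 * C * (y ^ 2 * ‖qq z‖) := by ring
      _ ≤ 16 * C * (2 * Real.exp (-y)) := by gcongr
      _ ≤ _ := by nlinarith [mul_pos hC (Real.exp_pos (-y))]
  · calc _ ≤ C * ‖qq z‖ := h0
      _ ≤ C * (2 * Real.exp (-y)) := by gcongr; exact hq1.trans hq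
      _ ≤ _ := by nlinarith [mul_pos hC (Real.exp_pos (-y))]

/-- The closed cone. -/
def cone : Set ℂ := {z | |z.re| ≤ z.im}

lemma cone_convex : Convex ℝ cone := by
  intro x hx y hy a b ha hb hab
  simp only [cone, Set.mem_setOf_eq, abs_le, Complex.add_re, Complex.add_im, Complex.real_smul,
    Complex.re_ofReal_mul, Complex.im_ofReal_mul] at *
  constructor <;> nlinarith

lemma cone_im {z : ℂ} (hz : z ∈ cone) (h0 : z ≠ 0) : 0 < z.im := by
  have h : |z.re| ≤ z.im := hz
  rcases ((abs_nonneg _).trans h).lt_or_eq with h1 | h1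
  · exact h1
  · exfalso; apply h0
    rw [← h1] at h
    have := abs_nonpos_iff.1 h
    exact Complex.ext this h1.symm

lemma neg_inv_im (z : ℂ) : (-1/z).im = z.im / Complex.normSq z := by
  rw [neg_div, one_div, Complex.neg_im, Complex.inv_im]; ring

lemma FF_small : ∃ C > 0, ∃ δ > 0, ∀ z ∈ cone, ‖z‖ < δ → ‖FF z‖ ≤ C * ‖z‖ ^ 2 := by
  obtain ⟨C, hC, Y, hY, h⟩ := asym
  refine ⟨C, hC, 1 / (2 * Y), by positivity, ?_⟩
  intro z hz hzd
  rcases eq_or_ne z 0 with rfl | h0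
  · simp [FF]
  have him := cone_im hz h0
  have hre : |z.re| ≤ z.im := hz
  have hn : Complex.normSq z ≤ 2 * z.im ^ 2 := by
    rw [Complex.normSq_apply]
    have := sq_abs z.re
    nlinarith [abs_nonneg z.re]
  have hn0 : 0 < Complex.normSq z := Complex.normSq_pos.2 h0
  have hY' : Y ≤ (-1/z).im := by
    rw [neg_inv_im, le_div_iff₀ hn0]
    have : z.im ≤ ‖z‖ := Complex.im_le_norm z
    have h2 : z.im * (2 * Y) ≤ 1 := by
      rw [lt_div_iff₀ (by positivity)] at hzd
      nlinarith
    nlinarith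
  have h1 := (h _ hY').1
  rw [FF, norm_mul, norm_pow]
  gcongr
  refine h1.trans ?_
  have : ‖qq (-1/z)‖ ≤ 1 := by
    rw [norm_qq]
    apply Real.exp_le_one_iff.2
    have : 0 ≤ (-1/z).im := by linarith
    have := Real.pi_pos
    simp; positivity
  nlinarith

lemma FF_diff {z : ℂ} (hz : 0 < z.im) : DifferentiableAt ℂ FF z := by
  have h0 : z ≠ 0 := by rintro rfl; simp at hz
  have him : 0 < (-1/z).im := by
    rw [neg_inv_im]; exact div_pos hz (Complex.normSq_pos.2 h0)
  have h1 : DifferentiableAt ℂ (fun w : ℂ => -1/w) z := by fun_prop (disch := assumption)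
  have h2 : DifferentiableAt ℂ (fun w => phi0 (-1/w)) z := (phi0_diff him).comp z h1
  unfold FF
  fun_prop

lemma FF_diffOn : DifferentiableOn ℂ FF cone := by
  intro z hz
  rcases eq_or_ne z 0 with rfl | h0
  · obtain ⟨C, hC, δ, hδ, h⟩ := FF_small
    refine (HasDerivWithinAt.differentiableWithinAt (f' := 0) ?_)
    rw [hasDerivWithinAt_iff_isLittleO]
    have hF0 : FF 0 = 0 := by simp [FF]
    simp only [hF0, sub_zero, smul_zero]
    have h1 : FF =O[𝓝[cone] 0] fun z => ‖z‖ ^ 2 := by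
      refine IsBigO.of_bound C ?_
      filter_upwards [self_mem_nhdsWithin, mem_nhdsWithin_of_mem_nhds (Metric.ball_mem_nhds (0:ℂ) hδ)] with w hw hwd
      simpa using h w hw (by simpa using hwd)
    refine h1.trans_isLittleO ?_
    refine IsLittleO.mono ?_ nhdsWithin_le_nhds
    exact isLittleO_norm_pow_id one_lt_two
  · exact (FF_diff (cone_im hz h0)).differentiableWithinAt

lemma diff2 {z : ℂ} (hz : 0 < z.im) : RR (z + 1) + RR (z - 1) - 2 * RR z = 2 * phi0 z := by
  have hz1 : 0 < (z+1).im := by simpa using hz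
  have hz2 : 0 < (z-1).im := by simpa using hz
  have a0 := phi0_T (z-1)
  have a2 := phim2_T (z-1)
  have a4 := phim4_T (z-1)
  have q1 : qq (z+1) = qq z := by
    have := exp_per 1 z
    simpa [qq] using this
  have q2 : qq (z-1) = qq z := by
    have := exp_per 1 (z-1)
    simp only [sub_add_cancel] at this
    simpa [qq] using this.symm
  rw [sub_add_cancel] at a0 a2 a4
  rw [RR_eq hz1, RR_eq hz2, RR_eq hz, phi0_T, phim2_T, phim4_T, ← a0, ← a2, ← a4, q1, q2]
  ring

noncomputable def ee (r : ℝ) (z : ℂ) : ℂ := Complex.exp ((Real.pi:ℂ) * Complex.I * (r:ℂ)^2 * z)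

lemma ee_add (r : ℝ) (z w : ℂ) : ee r (z + w) = ee r z * ee r w := by
  rw [ee, ee, ee, ← Complex.exp_add]; congr 1; ring

lemma norm_ee (r : ℝ) {z : ℂ} (hz : 0 ≤ z.im) : ‖ee r z‖ ≤ 1 := by
  rw [ee, Complex.norm_exp, Real.exp_le_one_iff]
  have : ((Real.pi:ℂ) * Complex.I * (r:ℂ)^2 * z).re = -(Real.pi * r ^ 2 * z.im) := by
    rw [show (Real.pi:ℂ) * Complex.I * (r:ℂ)^2 * z = ((Real.pi * r ^ 2 : ℝ) : ℂ) * (Complex.I * z) by push_cast; ring]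
    rw [Complex.re_ofReal_mul]; simp
  rw [this]
  have := Real.pi_pos
  simp; positivity

lemma ee_diff (r : ℝ) : Differentiable ℂ (ee r) := by
  unfold ee; fun_prop

lemma QQ_diff : Differentiable ℂ QQ := by
  unfold QQ; fun_prop

lemma It_mem {t : ℝ} (ht : 0 ≤ t) : Complex.I * t ∈ cone := by simpa [cone] using ht

lemma RR_contOn : ContinuousOn (fun t : ℝ => RR (Complex.I * t)) (Set.Ici 0) := by
  have h : ContinuousOn RR cone := FF_diffOn.continuousOn.sub QQ_diff.continuous.continuousOn
  refine h.comp (by fun_prop) ?_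
  intro t ht
  exact It_mem ht

lemma integrable_aux {f : ℝ → ℂ} {a C Y : ℝ} (hf : ContinuousOn f (Set.Ici a))
    (h : ∀ t ≥ Y, ‖f t‖ ≤ C * Real.exp (-t)) : IntegrableOn f (Set.Ioi a) := by
  have ho : f =O[atTop] fun x : ℝ => Real.exp (-1 * x) := by
    refine IsBigO.of_bound C ?_
    filter_upwards [eventually_ge_atTop Y] with t ht
    simpa using h t ht
  exact integrableOn_Ici_iff_integrableOn_Ioi (by finiteness) |>.mp <|
    (hf.locallyIntegrableOn measurableSet_Ici).integrableOn_of_isBigO_atTop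
    ho ⟨Set.Ioi 1, Ioi_mem_atTop 1, exp_neg_integrableOn_Ioi 1 one_pos⟩

lemma RR_int (r : ℝ) : IntegrableOn (fun t : ℝ => RR (Complex.I * t) * ee r (Complex.I * t)) (Set.Ioi 0) := by
  obtain ⟨C, hC, Y, hY, h⟩ := RR_bd
  refine integrable_aux (C := C) (Y := Y) (RR_contOn.mul ?_) ?_
  · exact ((ee_diff r).continuous.comp (by fun_prop)).continuousOn
  · intro t ht
    have h1 := (h (Complex.I * t) (by simp) (by simpa using ht)).1
    have h2 := norm_ee r (z := Complex.I * t) (by simp; linarith)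
    rw [norm_mul]
    calc _ ≤ (C * Real.exp (-(Complex.I * t).im)) * 1 := by gcongr
      _ = _ := by simp

lemma phi0_int (r : ℝ) : IntegrableOn (fun t : ℝ => phi0 (Complex.I * t) * ee r (Complex.I * t)) (Set.Ioi 1) := by
  obtain ⟨C, hC, Y, hY, h⟩ := RR_bd
  refine integrable_aux (C := C) (Y := Y) (ContinuousOn.mul ?_ ?_) ?_
  · intro t ht
    have ht : 1 ≤ t := ht
    have : ContinuousAt (fun t : ℝ => Complex.I * (t : ℂ)) t := by fun_prop
    exact (ContinuousAt.comp (f := fun t : ℝ => Complex.I * (t : ℂ)) (phi0_diff (by simp; linarith)).continuousAt this).continuousWithinAt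
  · exact ((ee_diff r).continuous.comp (by fun_prop)).continuousOn
  · intro t ht
    have h1 := (h (Complex.I * t) (by simp) (by simpa using ht)).2
    have h2 := norm_ee r (z := Complex.I * t) (by simp; linarith)
    rw [norm_mul]
    calc _ ≤ (C * Real.exp (-(Complex.I * t).im)) * 1 := by gcongr
      _ = _ := by simp

/-- primitive of `QQ * ee`. -/
noncomputable def AA (r : ℝ) (z : ℂ) : ℂ := ee r z *
  (-(36 / (Real.pi : ℂ) ^ 2) * Complex.exp (-2 * Real.pi * Complex.I * z) / (Real.pi * Complex.I * (r ^ 2 - 2))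
   - 8640 * Complex.I / Real.pi * (z / (Real.pi * Complex.I * r ^ 2) - 1 / (Real.pi * Complex.I * r ^ 2) ^ 2)
   - 18144 / (Real.pi : ℂ) ^ 2 / (Real.pi * Complex.I * r ^ 2))

lemma AA_deriv {r : ℝ} (h0 : (r : ℂ) ≠ 0) (h2 : (r : ℂ) ^ 2 - 2 ≠ 0) (z : ℂ) :
    HasDerivAt (AA r) (QQ z * ee r z) z := by
  have hp : (Real.pi : ℂ) ≠ 0 := by exact_mod_cast Real.pi_ne_zero
  have hI := Complex.I_ne_zero
  have d1 : HasDerivAt (ee r) (ee r z * (Real.pi * Complex.I * r ^ 2)) z := by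
    have := ((hasDerivAt_id z).const_mul ((Real.pi:ℂ) * Complex.I * (r:ℂ)^2)).cexp
    simp only [id, mul_one] at this
    exact this
  have d2 : HasDerivAt (fun z => Complex.exp (-2 * Real.pi * Complex.I * z)) (Complex.exp (-2 * Real.pi * Complex.I * z) * (-2 * Real.pi * Complex.I)) z := by
    have := ((hasDerivAt_id z).const_mul (-2 * (Real.pi:ℂ) * Complex.I)).cexp
    simpa using this
  have d3 := d1.mul (((((d2.const_mul (-(36 / (Real.pi : ℂ) ^ 2))).div_const (Real.pi * Complex.I * ((r:ℂ) ^ 2 - 2))).sub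
    ((((hasDerivAt_id z).div_const (Real.pi * Complex.I * (r:ℂ) ^ 2)).sub_const (1 / (Real.pi * Complex.I * (r:ℂ) ^ 2) ^ 2)).const_mul (8640 * Complex.I / Real.pi)))).sub_const (18144 / (Real.pi : ℂ) ^ 2 / (Real.pi * Complex.I * r ^ 2)))
  refine d3.congr_deriv ?_
  rw [QQ]
  simp only [id, Pi.sub_apply]
  generalize Complex.exp (-2 * Real.pi * Complex.I * z) = E
  generalize ee r z = e
  field_simp
  ring

lemma ee_neg_one (r : ℝ) : ee r (-1) * ee r 1 = 1 := by
  rw [← ee_add]; simp [ee]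

lemma AA_diff2 (r : ℝ) (z : ℂ) :
    ee r (-1) * AA r (z + 1) + ee r 1 * AA r (z - 1) - 2 * AA r z = 0 := by
  have e1 : Complex.exp (-2 * Real.pi * Complex.I * (z+1)) = Complex.exp (-2 * Real.pi * Complex.I * z) := by
    rw [Complex.exp_eq_exp_iff_exists_int]; exact ⟨-1, by push_cast; ring⟩
  have e2 : Complex.exp (-2 * Real.pi * Complex.I * (z-1)) = Complex.exp (-2 * Real.pi * Complex.I * z) := by
    rw [Complex.exp_eq_exp_iff_exists_int]; exact ⟨1, by push_cast; ring⟩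
  have h := ee_neg_one r
  simp only [AA, e1, e2, sub_eq_add_neg z 1, ee_add]
  rw [← sub_eq_add_neg z 1, e2]
  have a : ∀ X : ℂ, ee r (-1) * (ee r z * ee r 1 * X) = ee r z * X := by
    intro X; linear_combination ee r z * X * h
  have b : ∀ X : ℂ, ee r 1 * (ee r z * ee r (-1) * X) = ee r z * X := by
    intro X; linear_combination ee r z * X * h
  rw [a, b]
  ring

lemma ee_sin (r : ℝ) : ee r (-1) + ee r 1 - 2 = -4 * ((Real.sin (Real.pi * r ^ 2 / 2) : ℂ)) ^ 2 := by
  have h : ee r 1 + ee r (-1) = 2 * Complex.cos (Real.pi * r ^ 2) := by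
    rw [Complex.cos, ee, ee]
    rw [show (Real.pi:ℂ) * Complex.I * (r:ℂ)^2 * 1 = Real.pi * r ^ 2 * Complex.I by ring,
      show (Real.pi:ℂ) * Complex.I * (r:ℂ)^2 * (-1) = -(Real.pi * r ^ 2) * Complex.I by ring]
    ring
  have h2 : Complex.cos (Real.pi * r ^ 2) = 1 - 2 * (Complex.sin (Real.pi * r ^ 2 / 2)) ^ 2 := by
    have := Complex.cos_two_mul (Real.pi * r ^ 2 / 2)
    rw [show (2:ℂ) * (Real.pi * r ^ 2 / 2) = Real.pi * r ^ 2 by ring] at this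
    rw [this, Complex.cos_sq']; ring
  push_cast
  linear_combination h + 2 * h2

/-- integrals along rays from the vertex of the cone -/
lemma seg_prim {r : ℝ} {Ψ : ℂ → ℂ} (hΨ : ∀ z ∈ cone, HasDerivWithinAt Ψ (FF z * ee r z) cone z)
    {v : ℂ} (hv : v ∈ cone) :
    v * ∫ t in (0:ℝ)..1, FF (t * v) * ee r (t * v) = Ψ v - Ψ 0 := by
  have hmaps : Set.MapsTo (fun t : ℝ => (t : ℂ) * v) (Set.Ici 0) cone := by
    intro t ht
    have ht : 0 ≤ t := ht
    have hv : |v.re| ≤ v.im := hv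
    simp only [cone, Set.mem_setOf_eq, Complex.re_ofReal_mul, Complex.im_ofReal_mul, abs_mul, abs_of_nonneg ht]
    gcongr
  have hd : ∀ t ∈ Set.Ici (0:ℝ), HasDerivWithinAt (fun t : ℝ => Ψ (t * v)) (v * (FF (t * v) * ee r (t * v))) (Set.Ici 0) t := by
    intro t ht
    have h1 : HasDerivWithinAt (fun t : ℝ => (t : ℂ) * v) v (Set.Ici 0) t := by
      simpa using ((Complex.ofRealCLM.hasDerivAt (x := t)).mul_const v).hasDerivWithinAt
    have := HasDerivWithinAt.scomp t (hΨ _ (hmaps ht)) h1 hmaps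
    simpa [Function.comp_def] using this
  have hc : ContinuousOn (fun z => FF z * ee r z) cone :=
    FF_diffOn.continuousOn.mul (ee_diff r).continuous.continuousOn
  have hc2 : ContinuousOn (fun t : ℝ => v * (FF (t * v) * ee r (t * v))) (Set.Icc 0 1) := by
    refine continuousOn_const.mul (hc.comp (f := fun t : ℝ => (t : ℂ) * v) (by fun_prop) (hmaps.mono_left Set.Icc_subset_Ici_self))
  rw [← intervalIntegral.integral_const_mul]
  rw [intervalIntegral.integral_eq_sub_of_hasDerivAt_of_le zero_le_one (f := fun t : ℝ => Ψ (t * v))]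
  · simp
  · intro t ht
    exact ((hd t ht.1).continuousWithinAt).mono Set.Icc_subset_Ici_self
  · intro t ht
    exact (hd t ht.1.le).hasDerivAt (Ici_mem_nhds ht.1)
  · apply ContinuousOn.intervalIntegrable
    rwa [Set.uIcc_of_le zero_le_one]

lemma horiz {r : ℝ} {Φ : ℂ → ℂ} (hΦ : ∀ z ∈ cone, HasDerivWithinAt Φ (RR z * ee r z) cone z)
    {σ : ℝ} (hσ : |σ| ≤ 1) :
    Tendsto (fun t : ℝ => Φ (Complex.I * t + σ) - Φ (Complex.I * t)) atTop (𝓝 0) := by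
  obtain ⟨C, hC, Y, hY, h⟩ := RR_bd
  have hlim : Tendsto (fun t : ℝ => C * Real.exp (-t)) atTop (𝓝 0) := by
    simpa using Real.tendsto_exp_neg_atTop_nhds_zero.const_mul C
  refine squeeze_zero_norm' ?_ hlim
  filter_upwards [eventually_ge_atTop Y] with t ht
  have hconv : Convex ℝ (Set.Icc (-1:ℝ) 1 ×ℂ {t}) := by
    have e : (Set.Icc (-1:ℝ) 1 ×ℂ {t}) = Complex.reCLM ⁻¹' (Set.Icc (-1:ℝ) 1) ∩ Complex.imCLM ⁻¹' {t} := rfl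
    rw [e]
    exact ((convex_Icc (-1:ℝ) 1).linear_preimage Complex.reCLM.toLinearMap).inter
      ((convex_singleton t).linear_preimage Complex.imCLM.toLinearMap)
  have hsub : (Set.Icc (-1:ℝ) 1 ×ℂ {t}) ⊆ cone := by
    intro z hz
    obtain ⟨h1, h2⟩ := Complex.mem_reProdIm.1 hz
    have h2 : z.im = t := h2
    have := abs_le.2 ⟨h1.1, h1.2⟩
    show |z.re| ≤ z.im
    linarith
  have hb : ∀ z ∈ (Set.Icc (-1:ℝ) 1 ×ℂ {t}), ‖RR z * ee r z‖ ≤ C * Real.exp (-t) := by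
    intro z hz
    obtain ⟨h1, h2⟩ := Complex.mem_reProdIm.1 hz
    have h2 : z.im = t := h2
    have h3 := (h z (abs_le.2 ⟨h1.1, h1.2⟩) (by linarith)).1
    have h4 := norm_ee r (z := z) (by linarith)
    rw [h2] at h3
    rw [norm_mul]
    calc _ ≤ (C * Real.exp (-t)) * 1 := by gcongr
      _ = _ := by simp
  have hs := abs_le.1 hσ
  have := hconv.norm_image_sub_le_of_norm_hasDerivWithin_le (f := Φ)
    (fun z hz => (hΦ z (hsub hz)).mono hsub) hb (x := Complex.I * t) (y := Complex.I * t + σ)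
    (by simp [Complex.mem_reProdIm]) (by simp [Complex.mem_reProdIm]; exact hs)
  refine this.trans ?_
  have h5 : ‖Complex.I * (t:ℂ) + σ - Complex.I * t‖ ≤ 1 := by simpa using hσ
  have : 0 ≤ C * Real.exp (-t) := by positivity
  nlinarith

lemma main_id {r : ℝ} (h0 : (r : ℂ) ≠ 0) (h2 : (r : ℂ) ^ 2 - 2 ≠ 0) :
    aRad r = -4 * ((Real.sin (Real.pi * r ^ 2 / 2) : ℂ)) ^ 2 *
      (Complex.I * (∫ t in Set.Ioi (0:ℝ), RR (Complex.I * t) * ee r (Complex.I * t)) - AA r 0) := by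
  obtain ⟨Ψ, hΨ⟩ := cone_convex.exists_forall_hasDerivWithinAt
    (f := fun z => FF z * ee r z) (FF_diffOn.mul (ee_diff r).differentiableOn)
  set Φ : ℂ → ℂ := fun z => Ψ z - AA r z with hΦdef
  have hΦ : ∀ z ∈ cone, HasDerivWithinAt Φ (RR z * ee r z) cone z := by
    intro z hz
    refine ((hΨ z hz).sub (AA_deriv h0 h2 z).hasDerivWithinAt).congr_deriv ?_
    rw [RR]; ring
  -- vertical line
  have hd : ∀ t ∈ Set.Ici (0:ℝ), HasDerivWithinAt (fun t : ℝ => Φ (Complex.I * t))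
      (Complex.I * (RR (Complex.I * t) * ee r (Complex.I * t))) (Set.Ici 0) t := by
    intro t ht
    have h1 : HasDerivWithinAt (fun t : ℝ => Complex.I * (t : ℂ)) Complex.I (Set.Ici 0) t := by
      simpa using ((Complex.ofRealCLM.hasDerivAt (x := t)).const_mul Complex.I).hasDerivWithinAt
    have := HasDerivWithinAt.scomp t (hΦ _ (It_mem ht)) h1 (fun t ht => It_mem ht)
    simpa [Function.comp_def] using this
  have hdI : ∀ t ∈ Set.Ioi (0:ℝ), HasDerivAt (fun t : ℝ => Φ (Complex.I * t))
      (Complex.I * (RR (Complex.I * t) * ee r (Complex.I * t))) t := fun t ht =>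
    (hd t (Set.Ioi_subset_Ici_self ht)).hasDerivAt (Ici_mem_nhds ht)
  have hint : IntegrableOn (fun t : ℝ => Complex.I * (RR (Complex.I * t) * ee r (Complex.I * t))) (Set.Ioi 0) :=
    (RR_int r).const_mul _
  have hL := tendsto_limUnder_of_hasDerivAt_of_integrableOn_Ioi hdI hint
  set L := limUnder atTop (fun t : ℝ => Φ (Complex.I * t)) with hLdef
  have hv : Complex.I * (∫ t in Set.Ioi (0:ℝ), RR (Complex.I * t) * ee r (Complex.I * t)) = L - Φ 0 := by
    rw [← integral_const_mul]
    rw [integral_Ioi_of_hasDerivAt_of_tendsto (hd 0 (by simp)).continuousWithinAt hdI hint hL]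
    simp
  -- shifted lines
  have hsh : ∀ σ : ℝ, |σ| ≤ 1 → ∀ t ∈ Set.Ici (1:ℝ), HasDerivWithinAt (fun t : ℝ => Φ (Complex.I * t + σ))
      (Complex.I * (RR (Complex.I * t + σ) * ee r (Complex.I * t + σ))) (Set.Ici 1) t := by
    intro σ hσ t ht
    have hm : Set.MapsTo (fun t : ℝ => Complex.I * (t : ℂ) + σ) (Set.Ici 1) cone := by
      intro t ht
      have ht : 1 ≤ t := ht
      simp [cone]; linarith
    have h1 : HasDerivWithinAt (fun t : ℝ => Complex.I * (t : ℂ) + σ) Complex.I (Set.Ici 1) t := by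
      simpa using (((Complex.ofRealCLM.hasDerivAt (x := t)).const_mul Complex.I).add_const (σ : ℂ)).hasDerivWithinAt
    have := HasDerivWithinAt.scomp t (hΦ _ (hm ht)) h1 hm
    simpa [Function.comp_def] using this
  have hp := hsh 1 (by simp)
  have hn := hsh (-1) (by simp)
  have hLp : Tendsto (fun t : ℝ => Φ (Complex.I * t + (1:ℝ))) atTop (𝓝 L) := by
    simpa using (horiz hΦ (σ := 1) (by simp)).add hL
  have hLn : Tendsto (fun t : ℝ => Φ (Complex.I * t + (-1:ℝ))) atTop (𝓝 L) := by
    simpa using (horiz hΦ (σ := -1) (by simp)).add hL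
  set W : ℝ → ℂ := fun t => ee r (-1) * Φ (Complex.I * t + (1:ℝ)) +
    ee r 1 * Φ (Complex.I * t + (-1:ℝ)) - 2 * Φ (Complex.I * t) with hW
  have hWd : ∀ t ∈ Set.Ici (1:ℝ), HasDerivWithinAt W
      (2 * (Complex.I * (phi0 (Complex.I * t) * ee r (Complex.I * t)))) (Set.Ici 1) t := by
    intro t ht
    have ht1 : 1 ≤ t := ht
    have hd0 := (hd t (by simp; linarith)).mono (Set.Ici_subset_Ici.2 zero_le_one)
    refine ((((hp t ht).const_mul (ee r (-1))).add ((hn t ht).const_mul (ee r 1))).sub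
      (hd0.const_mul 2)).congr_deriv ?_
    have hdf := diff2 (z := Complex.I * t) (by simp; linarith)
    have he := ee_neg_one r
    push_cast
    rw [ee_add, ee_add, ← sub_eq_add_neg]
    linear_combination Complex.I * ee r (Complex.I * t) * hdf +
      Complex.I * ee r (Complex.I * t) * (RR (Complex.I * t + 1) + RR (Complex.I * t - 1)) * he
  have hWL : Tendsto W atTop (𝓝 (ee r (-1) * L + ee r 1 * L - 2 * L)) :=
    ((hLp.const_mul _).add (hLn.const_mul _)).sub (hL.const_mul _)
  have hray : 2 * rayIntFrom 1 (fun z => phi0 z * Complex.exp ((Real.pi:ℂ) * Complex.I * (r:ℂ)^2 * z)) =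
      (ee r (-1) * L + ee r 1 * L - 2 * L) - W 1 := by
    rw [rayIntFrom, ← integral_const_mul, ← integral_const_mul]
    refine integral_Ioi_of_hasDerivAt_of_tendsto (hWd 1 (by simp)).continuousWithinAt
      (fun t ht => (hWd t (Set.Ioi_subset_Ici_self ht)).hasDerivAt (Ici_mem_nhds ht)) ?_ hWL
    exact ((phi0_int r).const_mul _).const_mul _
  -- segments
  have s0 : segInt 0 Complex.I
      (fun z => phi0 (-1/z) * z^2 * Complex.exp ((Real.pi:ℂ) * Complex.I * (r:ℂ)^2 * z)) = Ψ Complex.I - Ψ 0 := by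
    rw [← seg_prim hΨ (v := Complex.I) (by simp [cone]), segInt]
    simp only [sub_zero, zero_add]
    rfl
  have s1 : segInt (-1) Complex.I
      (fun z => phi0 (-1/(z+1)) * (z+1)^2 * Complex.exp ((Real.pi:ℂ) * Complex.I * (r:ℂ)^2 * z)) =
      ee r (-1) * (Ψ (Complex.I + 1) - Ψ 0) := by
    rw [← seg_prim hΨ (v := Complex.I + 1) (by simp [cone]), segInt, sub_neg_eq_add, mul_left_comm]
    congr 1
    rw [← intervalIntegral.integral_const_mul]
    refine intervalIntegral.integral_congr fun t _ => ?_
    beta_reduce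
    rw [show (-1 + (t:ℂ) * (Complex.I + 1) + 1) = t * (Complex.I + 1) by ring, FF]
    have := ee_add r (-1) (t * (Complex.I + 1))
    rw [ee] at this
    rw [this]; ring
  have s2 : segInt 1 Complex.I
      (fun z => phi0 (-1/(z-1)) * (z-1)^2 * Complex.exp ((Real.pi:ℂ) * Complex.I * (r:ℂ)^2 * z)) =
      ee r 1 * (Ψ (Complex.I - 1) - Ψ 0) := by
    rw [← seg_prim hΨ (v := Complex.I - 1) (by simp [cone]), segInt, mul_left_comm]
    congr 1
    rw [← intervalIntegral.integral_const_mul]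
    refine intervalIntegral.integral_congr fun t _ => ?_
    beta_reduce
    rw [show (1 + (t:ℂ) * (Complex.I - 1) - 1) = t * (Complex.I - 1) by ring, FF]
    have := ee_add r 1 (t * (Complex.I - 1))
    rw [ee] at this
    rw [this]; ring
  rw [aRad, s0, s1, s2, hray, hv, ← ee_sin]
  have hA := AA_diff2 r Complex.I
  simp only [hW, hΦdef]
  push_cast
  simp only [mul_one, ← sub_eq_add_neg]
  linear_combination hA

lemma gg_eq (s t : ℝ) : ((t : ℂ) ^ 2 * phi0 (Complex.I / (t : ℂ))
          - (36 / (Real.pi : ℂ) ^ 2) * Complex.exp (2 * (Real.pi : ℂ) * (t : ℂ))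
          + (8640 / (Real.pi : ℂ)) * (t : ℂ) - 18144 / (Real.pi : ℂ) ^ 2) *
        Complex.exp (-(Real.pi : ℂ) * (s : ℂ) ^ 2 * (t : ℂ)) =
      -(RR (Complex.I * t) * ee s (Complex.I * t)) := by
  have hI : Complex.I * Complex.I = -1 := Complex.I_mul_I
  have a : -1 / (Complex.I * t) = Complex.I / t := by
    rw [← hI, mul_div_mul_left _ _ Complex.I_ne_zero]
  have b : -2 * (Real.pi : ℂ) * Complex.I * (Complex.I * t) = 2 * Real.pi * t := by
    linear_combination -2 * (Real.pi : ℂ) * t * hI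
  have c : (Real.pi:ℂ) * Complex.I * (s:ℂ)^2 * (Complex.I * t) = -(Real.pi : ℂ) * (s : ℂ) ^ 2 * (t : ℂ) := by
    linear_combination (Real.pi : ℂ) * (s:ℂ)^2 * t * hI
  rw [RR, FF, QQ, ee, a, b, c]
  linear_combination Complex.exp (-(Real.pi : ℂ) * (s : ℂ) ^ 2 * (t : ℂ)) *
    (phi0 (Complex.I / t) * t ^ 2 + 8640 / Real.pi * t) * hI

end Via

/-- **Proposition 3.** For `r ≥ 0` with `r ≠ 0`, `r ≠ √2`:
`a(r) = 4i sin²(πr²/2) (36/(π³(r²−2)) − 8640/(π³r⁴) + 18144/(π³r²)`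
`        + ∫₀^∞ (t²φ₀(i/t) − (36/π²)e^{2πt} + (8640/π)t − 18144/π²) e^{−πr²t} dt)`,
and the integral converges absolutely for all `r ≥ 0`. -/
theorem aRad_integral_representation (r : ℝ) (hr : 0 ≤ r) (hr0 : r ≠ 0)
    (hr2 : r ≠ Real.sqrt 2) :
    (∀ s : ℝ, 0 ≤ s → IntegrableOn
      (fun t : ℝ => ((t : ℂ) ^ 2 * phi0 (Complex.I / (t : ℂ))
          - (36 / (Real.pi : ℂ) ^ 2) * Complex.exp (2 * (Real.pi : ℂ) * (t : ℂ))
          + (8640 / (Real.pi : ℂ)) * (t : ℂ) - 18144 / (Real.pi : ℂ) ^ 2) *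
        Complex.exp (-(Real.pi : ℂ) * (s : ℂ) ^ 2 * (t : ℂ))) (Set.Ioi 0)) ∧
    aRad r = 4 * Complex.I * ((Real.sin (Real.pi * r ^ 2 / 2) : ℂ)) ^ 2 *
      (36 / ((Real.pi : ℂ) ^ 3 * ((r : ℂ) ^ 2 - 2)) - 8640 / ((Real.pi : ℂ) ^ 3 * (r : ℂ) ^ 4)
        + 18144 / ((Real.pi : ℂ) ^ 3 * (r : ℂ) ^ 2)
        + ∫ t in Set.Ioi (0 : ℝ), ((t : ℂ) ^ 2 * phi0 (Complex.I / (t : ℂ))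
            - (36 / (Real.pi : ℂ) ^ 2) * Complex.exp (2 * (Real.pi : ℂ) * (t : ℂ))
            + (8640 / (Real.pi : ℂ)) * (t : ℂ) - 18144 / (Real.pi : ℂ) ^ 2) *
          Complex.exp (-(Real.pi : ℂ) * (r : ℂ) ^ 2 * (t : ℂ))) := by
  have hrC : (r : ℂ) ≠ 0 := by exact_mod_cast hr0
  have hr2C : (r : ℂ) ^ 2 - 2 ≠ 0 := by
    intro h
    apply hr2
    have h' : r ^ 2 = 2 := by
      have : (r : ℂ) ^ 2 = 2 := sub_eq_zero.1 h
      exact_mod_cast this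
    rw [← h', Real.sqrt_sq hr]
  simp only [Via.gg_eq]
  refine ⟨fun s _ => (Via.RR_int s).neg, ?_⟩
  rw [Via.main_id hrC hr2C, integral_neg]
  have hp : (Real.pi : ℂ) ≠ 0 := by exact_mod_cast Real.pi_ne_zero
  have hA : Via.AA r 0 = Complex.I * (36 / ((Real.pi : ℂ) ^ 3 * ((r : ℂ) ^ 2 - 2)) - 8640 / ((Real.pi : ℂ) ^ 3 * (r : ℂ) ^ 4)
        + 18144 / ((Real.pi : ℂ) ^ 3 * (r : ℂ) ^ 2)) := by
    have hI := Complex.I_ne_zero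
    have hI2 : Complex.I ^ 2 = -1 := Complex.I_sq
    simp only [Via.AA, Via.ee, mul_zero, Complex.exp_zero, zero_div]
    field_simp
    ring_nf
    simp only [hI2]
    ring
  rw [hA]
  ring
end

section
/- The radial function a satisfies a(0) = −8640 i/π, a(√2) = 0, and the derivative of the radial profile satisfies a′(√2) = 72√2 · i/π. -/
open MeasureTheory

section
open scoped UpperHalfPlane MatrixGroups

lemma my_E2_eq (z : ℍ) : E2 z = EisensteinSeries.E2 z := by
  rw [EisensteinSeries.E2_eq_tsum_cexp, E2]
  congr 3
  ext n
  rw [← Complex.exp_nat_mul]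
  congr 2
  ring

lemma my_E4_eq (z : ℍ) : E4 z = ModularForm.E₄ z := by
  rw [EisensteinSeries.q_expansion_bernoulli _ (by decide), E4]
  have : bernoulli 4 = -1/30 := by decide +kernel
  rw [this]
  norm_num
  congr 1
  ext n
  rw [← Complex.exp_nat_mul]
  congr 2
  ring

lemma my_E6_eq (z : ℍ) : E6 z = ModularForm.E₆ z := by
  rw [EisensteinSeries.q_expansion_bernoulli _ (by decide), E6]
  have : bernoulli 6 = 1/42 := by decide +kernel
  rw [this]
  norm_num
  congr 1
  ext n
  rw [← Complex.exp_nat_mul]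
  congr 2
  ring

lemma my_S_coe (z : ℍ) : ((ModularGroup.S • z : ℍ) : ℂ) = -1 / (z:ℂ) := by
  rw [UpperHalfPlane.modular_S_smul]
  simp [neg_div, inv_neg]

lemma my_denom_S (z : ℍ) :
    UpperHalfPlane.denom (Matrix.SpecialLinearGroup.mapGL ℝ ModularGroup.S) (z:ℂ) = z := by
  change ((((ModularGroup.S 1 0 : ℤ) : ℝ) : ℂ) * z + (((ModularGroup.S 1 1 : ℤ) : ℝ) : ℂ)) = z
  simp [ModularGroup.S]

lemma my_E4_S (z : ℍ) : E4 (-1 / (z:ℂ)) = (z:ℂ)^4 * E4 z := by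
  have h := SlashInvariantForm.slash_action_eqn'' (ModularForm.E₄)
    (Γ := 𝒮ℒ) (γ := Matrix.SpecialLinearGroup.mapGL ℝ ModularGroup.S) ⟨_, rfl⟩ z
  change ModularForm.E₄ (ModularGroup.S • z) = _ at h
  rw [← my_S_coe, my_E4_eq, my_E4_eq, h]
  rw [my_denom_S]
  norm_cast

lemma my_E6_S (z : ℍ) : E6 (-1 / (z:ℂ)) = (z:ℂ)^6 * E6 z := by
  have h := SlashInvariantForm.slash_action_eqn'' (ModularForm.E₆)
    (Γ := 𝒮ℒ) (γ := Matrix.SpecialLinearGroup.mapGL ℝ ModularGroup.S) ⟨_, rfl⟩ z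
  change ModularForm.E₆ (ModularGroup.S • z) = _ at h
  rw [← my_S_coe, my_E6_eq, my_E6_eq, h]
  rw [my_denom_S]
  norm_cast

lemma my_E2_S (z : ℍ) : E2 (-1 / (z:ℂ)) = (z:ℂ)^2 * E2 z - 6 * Complex.I / Real.pi * z := by
  have h := EisensteinSeries.G2_S_transform z
  rw [← my_S_coe, my_E2_eq, my_E2_eq]
  have hz : (z:ℂ) ≠ 0 := z.ne_zero
  have hp : (Real.pi:ℂ) ≠ 0 := by exact_mod_cast Real.pi_ne_zero
  simp only [EisensteinSeries.E2, Pi.smul_apply, riemannZeta_two, smul_eq_mul]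
  rw [h]
  field_simp
  ring_nf

lemma my_D_ne (z : ℍ) : E4 z ^ 3 - E6 z ^ 2 ≠ 0 := by
  have h := ModularForm.discriminant_eq_E₄_cube_sub_E₆_sq z
  have h2 := ModularForm.discriminant_ne_zero z
  rw [h] at h2
  rw [my_E4_eq, my_E6_eq]
  intro h3
  simp [h3] at h2

/-- The numerator `E4 E2 - E6`. -/
noncomputable def myX (z : ℂ) : ℂ := E4 z * E2 z - E6 z

/-- The denominator. -/
noncomputable def myD (z : ℂ) : ℂ := E4 z ^ 3 - E6 z ^ 2

lemma my_D_ne' {z : ℂ} (hz : 0 < z.im) : myD z ≠ 0 := my_D_ne ⟨z, hz⟩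

lemma my_phi0 {z : ℂ} (hz : 0 < z.im) : phi0 z = 1728 * myX z ^ 2 / myD z := by
  have h := my_D_ne' hz
  simp only [phi0, varphim4, varphim2, jInv, myX]
  simp only [myD] at *
  field_simp
  ring

lemma my_phim2 {z : ℂ} : phim2 z = 1728 * E4 z * myX z / myD z := by
  simp only [phim2, varphim4, varphim2, myX, myD]
  ring

/-- The function `z ^ 2 φ₀(-1/z)`. -/
noncomputable def myf (z : ℂ) : ℂ := phi0 (-1 / z) * z ^ 2

lemma my_f_eq {z : ℂ} (hz : 0 < z.im) : myf z =
    z ^ 2 * phi0 z - 12 * Complex.I / Real.pi * z * phim2 z - 36 / Real.pi ^ 2 * phim4 z := by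
  have h := my_D_ne' hz
  have hS : 0 < (-1 / z).im := by
    have := (ModularGroup.S • (⟨z, hz⟩ : ℍ)).im_pos
    rw [← UpperHalfPlane.coe_im, my_S_coe] at this
    exact this
  have h0 : z ≠ 0 := by rintro rfl; simp at hz
  have hp : (Real.pi:ℂ) ≠ 0 := by exact_mod_cast Real.pi_ne_zero
  have e2 := my_E2_S ⟨z, hz⟩
  have e4 := my_E4_S ⟨z, hz⟩
  have e6 := my_E6_S ⟨z, hz⟩
  simp only at e2 e4 e6
  have hD : myD (-1 / z) = z ^ 12 * myD z := by
    simp only [myD]; rw [e4, e6]; ring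
  rw [myf, my_phi0 hz, my_phi0 hS, my_phim2, phim4, varphim4, hD, ← myD]
  have hX : myX (-1 / z) = z ^ 6 * myX z - 6 * Complex.I / Real.pi * z ^ 5 * E4 z := by
    simp only [myX]; rw [e4, e6, e2]; ring
  rw [hX]
  field_simp
  ring_nf
  simp only [Complex.I_sq]
  ring

end

section
open scoped Topology
open Filter

/-- Shifted divisor-sum generating series. -/
noncomputable def myH (k : ℕ) (q : ℂ) : ℂ :=
  ∑' n : ℕ, ((ArithmeticFunction.sigma k (n+1) : ℕ) : ℂ) * q ^ n

lemma myH_summable_bound (k : ℕ) {r : ℝ} (h0 : 0 < r) (hr : r < 1) :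
    Summable fun n : ℕ => ((ArithmeticFunction.sigma k (n+1) : ℕ) : ℝ) * r ^ n := by
  have h1 : Summable fun n : ℕ => ((n:ℝ)^(k+1)) * r ^ n := by
    apply summable_pow_mul_geometric_of_norm_lt_one
    rwa [Real.norm_of_nonneg h0.le]
  have h2 := ((summable_nat_add_iff 1).mpr h1).mul_right r⁻¹
  refine Summable.of_nonneg_of_le (fun n => by positivity) (fun n => ?_) h2
  have : (((n+1:ℕ):ℝ)^(k+1)) * r ^ (n+1) * r⁻¹ = (((n+1:ℕ):ℝ)^(k+1)) * r ^ n := by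
    field_simp
    exact pow_succ' r n
  rw [this]
  gcongr
  exact_mod_cast ArithmeticFunction.sigma_le_pow_succ k (n+1)

lemma myH_diff (k : ℕ) : DifferentiableOn ℂ (myH k) (Metric.ball 0 1) := by
  intro q hq
  have hq' : ‖q‖ < 1 := by simpa using hq
  obtain ⟨r, hr1, hr2⟩ := exists_between hq'
  have hr0 : 0 < r := (norm_nonneg q).trans_lt hr1
  have : DifferentiableOn ℂ (myH k) (Metric.ball 0 r) := by
    apply Complex.differentiableOn_tsum_of_summable_norm (myH_summable_bound k hr0 hr2)
    · intro n; fun_prop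
    · exact Metric.isOpen_ball
    · intro n w hw
      have : ‖w‖ < r := by simpa using hw
      rw [norm_mul, norm_pow, Complex.norm_natCast]
      gcongr
  exact ((this q (by simpa using hr1)).differentiableAt
    (Metric.isOpen_ball.mem_nhds (by simpa using hr1))).differentiableWithinAt

lemma myH_zero (k : ℕ) : myH k 0 = 1 := by
  rw [myH, tsum_eq_single 0]
  · simp
  · intro n hn; simp [hn]

lemma myH_cont (k : ℕ) : ContinuousAt (myH k) 0 :=
  ((myH_diff k).differentiableAt (Metric.isOpen_ball.mem_nhds (by simp))).continuousAt

/-- The nome. -/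
noncomputable def myq (z : ℂ) : ℂ := Complex.exp (2 * (Real.pi : ℂ) * Complex.I * z)

lemma my_tsum (k : ℕ) (z : ℂ) :
   ∑' n : ℕ+, ((ArithmeticFunction.sigma k n : ℕ) : ℂ) *
    Complex.exp (2 * (Real.pi : ℂ) * Complex.I * n * z) = myq z * myH k (myq z) := by
  rw [tsum_pnat_eq_tsum_succ (f := fun n : ℕ => ((ArithmeticFunction.sigma k n : ℕ) : ℂ) *
    Complex.exp (2 * (Real.pi : ℂ) * Complex.I * n * z)), myH, ← tsum_mul_left]
  congr 1
  ext n
  rw [mul_left_comm, ← pow_succ', myq, ← Complex.exp_nat_mul]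
  congr 2
  ring

lemma my_E2q (z : ℂ) : E2 z = 1 - 24 * (myq z * myH 1 (myq z)) := by rw [E2, my_tsum]
lemma my_E4q (z : ℂ) : E4 z = 1 + 240 * (myq z * myH 3 (myq z)) := by rw [E4, my_tsum]
lemma my_E6q (z : ℂ) : E6 z = 1 - 504 * (myq z * myH 5 (myq z)) := by rw [E6, my_tsum]

lemma myq_ne (z : ℂ) : myq z ≠ 0 := Complex.exp_ne_zero _

lemma myq_norm (z : ℂ) : ‖myq z‖ = Real.exp (-2 * Real.pi * z.im) := by
  rw [myq, Complex.norm_exp]; congr 1; simp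

lemma myq_mem {z : ℂ} (hz : 0 < z.im) : myq z ∈ Metric.ball (0:ℂ) 1 := by
  rw [mem_ball_zero_iff, myq_norm, Real.exp_lt_one_iff]
  have := Real.pi_pos
  nlinarith [mul_pos this hz]

lemma myq_diff : Differentiable ℂ myq := by unfold myq; fun_prop

lemma myq_add_one (z : ℂ) : myq (z + 1) = myq z := by
  rw [myq, mul_add, mul_one, Complex.exp_add, Complex.exp_two_pi_mul_I, mul_one, myq]

lemma myq_sub_one (z : ℂ) : myq (z - 1) = myq z := by
  rw [← myq_add_one, sub_add_cancel]

/-- q-series of the numerator. -/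
noncomputable def myU (q : ℂ) : ℂ :=
  240 * myH 3 q - 24 * myH 1 q + 504 * myH 5 q - 5760 * q * myH 1 q * myH 3 q

/-- q-series of the denominator. -/
noncomputable def myV (q : ℂ) : ℂ :=
  720 * myH 3 q + 172800 * q * myH 3 q ^ 2 + 13824000 * q ^ 2 * myH 3 q ^ 3 + 1008 * myH 5 q
    - 254016 * q * myH 5 q ^ 2

lemma my_X_eq (z : ℂ) : myX z = myq z * myU (myq z) := by
  rw [myX, my_E2q, my_E4q, my_E6q, myU]; ring

lemma my_D_eq (z : ℂ) : myD z = myq z * myV (myq z) := by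
  rw [myD, my_E4q, my_E6q, myV]; ring

lemma my_V_ne {z : ℂ} (hz : 0 < z.im) : myV (myq z) ≠ 0 := by
  have := my_D_ne' hz
  rw [my_D_eq] at this
  exact right_ne_zero_of_mul this

lemma my_U_diff : DifferentiableOn ℂ myU (Metric.ball 0 1) := by
  have h1 := myH_diff 1
  have h3 := myH_diff 3
  have h5 := myH_diff 5
  unfold myU; fun_prop

lemma my_V_diff : DifferentiableOn ℂ myV (Metric.ball 0 1) := by
  have h3 := myH_diff 3
  have h5 := myH_diff 5
  unfold myV; fun_prop

/-- Series for `φ₀/q`. -/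
noncomputable def myP0 (q : ℂ) : ℂ := 1728 * myU q ^ 2 / myV q
/-- Series for `φ₋₂`. -/
noncomputable def myP2 (q : ℂ) : ℂ := 1728 * (1 + 240 * (q * myH 3 q)) * myU q / myV q
/-- Series for `q φ₋₄`. -/
noncomputable def myP4 (q : ℂ) : ℂ := 1728 * (1 + 240 * (q * myH 3 q)) ^ 2 / myV q

lemma my_phi0q {z : ℂ} (hz : 0 < z.im) : phi0 z = myq z * myP0 (myq z) := by
  have := my_V_ne hz
  have := myq_ne z
  rw [my_phi0 hz, myP0, my_X_eq, my_D_eq]; field_simp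

lemma my_phim2q {z : ℂ} (hz : 0 < z.im) : phim2 z = myP2 (myq z) := by
  have := my_V_ne hz
  have := myq_ne z
  rw [my_phim2, myP2, my_X_eq, my_D_eq, my_E4q]; field_simp

lemma my_phim4q {z : ℂ} (hz : 0 < z.im) : myq z * phim4 z = myP4 (myq z) := by
  have := my_V_ne hz
  have := myq_ne z
  rw [phim4, varphim4, ← myD, myP4, my_D_eq, my_E4q]; field_simp

lemma my_P_tendsto : Tendsto myP0 (𝓝 0) (𝓝 518400) ∧ Tendsto myP2 (𝓝 0) (𝓝 720) ∧
    Tendsto myP4 (𝓝 0) (𝓝 1) := by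
  have h1 := myH_cont 1
  have h3 := myH_cont 3
  have h5 := myH_cont 5
  have hU : ContinuousAt myU 0 := by unfold myU; fun_prop
  have hV : ContinuousAt myV 0 := by unfold myV; fun_prop
  have hU0 : myU 0 = 720 := by simp [myU, myH_zero]; norm_num
  have hV0 : myV 0 = 1728 := by simp [myV, myH_zero]; norm_num
  have hne : myV 0 ≠ 0 := by rw [hV0]; norm_num
  refine ⟨?_, ?_, ?_⟩
  · have : ContinuousAt myP0 0 := by unfold myP0; fun_prop (disch := assumption)
    have h := this.tendsto
    have e : myP0 0 = 518400 := by rw [myP0, hU0, hV0]; norm_num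
    rwa [e] at h
  · have : ContinuousAt myP2 0 := by unfold myP2; fun_prop (disch := assumption)
    have h := this.tendsto
    have e : myP2 0 = 720 := by rw [myP2, hU0, hV0]; norm_num
    rwa [e] at h
  · have : ContinuousAt myP4 0 := by unfold myP4; fun_prop (disch := assumption)
    have h := this.tendsto
    have e : myP4 0 = 1 := by rw [myP4, hV0]; norm_num
    rwa [e] at h

lemma my_phi0_diff : DifferentiableOn ℂ phi0 {z | 0 < z.im} := by
  have h : DifferentiableOn ℂ (fun z => myq z * myP0 (myq z)) {z | 0 < z.im} := by
    have hm : Set.MapsTo myq {z | 0 < z.im} (Metric.ball 0 1) := fun z hz => myq_mem hz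
    have hq : DifferentiableOn ℂ myq {z | 0 < z.im} := myq_diff.differentiableOn
    have hU := my_U_diff.comp hq hm
    have hV := my_V_diff.comp hq hm
    simp only [myP0]
    refine hq.mul (DifferentiableOn.div ((hU.pow 2).const_mul 1728) hV ?_)
    exact fun z hz => my_V_ne hz
  exact h.congr fun z hz => my_phi0q hz

lemma my_phi0_add_one {z : ℂ} (hz : 0 < z.im) : phi0 (z + 1) = phi0 z := by
  rw [my_phi0q hz, my_phi0q (by simpa using hz), myq_add_one]

lemma my_S_im {z : ℂ} (hz : 0 < z.im) : 0 < (-1 / z).im := by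
  have h0 : z ≠ 0 := by rintro rfl; simp at hz
  have : 0 < Complex.normSq z := Complex.normSq_pos.mpr h0
  rw [show -1 / z = -z⁻¹ by rw [neg_div, one_div], Complex.neg_im, Complex.inv_im, neg_div, neg_neg]
  positivity

lemma my_f_diff : DifferentiableOn ℂ myf {z | 0 < z.im} := by
  have hm : Set.MapsTo (fun z : ℂ => -1 / z) {z | 0 < z.im} {z | 0 < z.im} :=
    fun z hz => my_S_im hz
  have h1 : DifferentiableOn ℂ (fun z : ℂ => -1 / z) {z | 0 < z.im} := by
    refine DifferentiableOn.div (by fun_prop) (by fun_prop) ?_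
    rintro z hz rfl
    simp at hz
  have := my_phi0_diff.comp h1 hm
  exact this.mul (by fun_prop)

lemma my_f_sub {w : ℂ} (hw : 0 < w.im) : myf w - myf (w - 1) =
    (2 * w - 1) * phi0 w - 12 * Complex.I / Real.pi * phim2 w := by
  have hw' : 0 < (w - 1).im := by simpa using hw
  have h0 : phi0 (w - 1) = phi0 w := by
    rw [my_phi0q hw, my_phi0q hw', myq_sub_one]
  have h2 : phim2 (w - 1) = phim2 w := by
    rw [my_phim2q hw, my_phim2q hw', myq_sub_one]
  have h4 : phim4 (w - 1) = phim4 w := by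
    have a := my_phim4q hw
    have b := my_phim4q hw'
    rw [myq_sub_one, ← a] at b
    exact mul_left_cancel₀ (myq_ne w) b
  rw [my_f_eq hw, my_f_eq hw', h0, h2, h4]
  ring

lemma my_f_second {w : ℂ} (hw : 0 < w.im) : myf (w + 1) + myf (w - 1) - 2 * myf w = 2 * phi0 w := by
  have hw' : 0 < (w + 1).im := by simpa using hw
  have a := my_f_sub hw
  have b := my_f_sub hw'
  rw [add_sub_cancel_right, my_phi0_add_one hw, my_phim2q hw', myq_add_one, ← my_phim2q hw] at b
  linear_combination b - a

end

section
open scoped Topology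
open Filter MeasureTheory

lemma my_prim {f : ℂ → ℂ} (hf : DifferentiableOn ℂ f {z | 0 < z.im}) :
    ∃ F : ℂ → ℂ, ∀ z : ℂ, 0 < z.im → HasDerivAt F (f z) z := by
  have hne : ∀ w ∈ Metric.ball (0:ℂ) 1, (1 - w) ≠ 0 := by
    intro w hw h
    rw [sub_eq_zero] at h
    rw [← h] at hw
    simp at hw
  have hm : Set.MapsTo (fun w : ℂ => Complex.I * (1 + w) / (1 - w)) (Metric.ball 0 1)
      {z | 0 < z.im} := by
    intro w hw
    have h1 := hne w hw
    have h2 : 0 < Complex.normSq (1 - w) := Complex.normSq_pos.mpr h1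
    have h3 : Complex.normSq w < 1 := by
      rw [Complex.normSq_eq_norm_sq]
      have : ‖w‖ < 1 := by simpa using hw
      nlinarith [norm_nonneg w]
    rw [Complex.normSq_apply] at h3
    have : (Complex.I * (1 + w) / (1 - w)).im
        = (1 - (w.re * w.re + w.im * w.im)) / Complex.normSq (1 - w) := by
      rw [Complex.div_im]
      simp
      field_simp
      ring
    simp only [Set.mem_ofPred_eq, this]
    apply div_pos _ h2
    linarith
  have hd : DifferentiableOn ℂ (fun w : ℂ => Complex.I * (1 + w) / (1 - w)) (Metric.ball 0 1) :=
    DifferentiableOn.div (by fun_prop) (by fun_prop) hne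
  have hd2 : DifferentiableOn ℂ (fun w : ℂ => f (Complex.I * (1 + w) / (1 - w)) *
      (2 * Complex.I / (1 - w) ^ 2)) (Metric.ball 0 1) := by
    refine (hf.comp hd hm).mul (DifferentiableOn.div (by fun_prop) (by fun_prop) ?_)
    exact fun w hw => pow_ne_zero 2 (hne w hw)
  obtain ⟨G, hG⟩ := hd2.isExactOn_ball
  refine ⟨fun z => G ((z - Complex.I) / (z + Complex.I)), fun z hz => ?_⟩
  have hzI : z + Complex.I ≠ 0 := by
    intro h
    have := congrArg Complex.im h
    simp at this
    linarith
  have hmem : (z - Complex.I) / (z + Complex.I) ∈ Metric.ball (0:ℂ) 1 := by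
    rw [mem_ball_zero_iff, norm_div, div_lt_one (norm_pos_iff.mpr hzI)]
    apply lt_of_pow_lt_pow_left₀ 2 (norm_nonneg _)
    rw [← Complex.normSq_eq_norm_sq, ← Complex.normSq_eq_norm_sq, Complex.normSq_apply,
      Complex.normSq_apply]
    simp
    nlinarith
  have h1 := hG _ hmem
  have h2 : HasDerivAt (fun z : ℂ => (z - Complex.I) / (z + Complex.I))
      (2 * Complex.I / (z + Complex.I) ^ 2) z := by
    have := ((hasDerivAt_id z).sub_const Complex.I).div ((hasDerivAt_id z).add_const Complex.I) hzI
    convert! this using 1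
    simp
    ring
  have h3 := h1.comp z h2
  convert! h3 using 1
  have e1 : 1 - (z - Complex.I) / (z + Complex.I) = 2 * Complex.I / (z + Complex.I) := by
    field_simp; ring
  have e2 : Complex.I * (1 + (z - Complex.I) / (z + Complex.I)) = 
     z * (2 * Complex.I / (z + Complex.I)) := by
    field_simp; ring
  have h4 : 2 * Complex.I / (z + Complex.I) ≠ 0 := div_ne_zero (by simp) hzI
  beta_reduce
  rw [e2, e1, mul_div_cancel_right₀ _ h4]
  have hI : Complex.I ≠ 0 := Complex.I_ne_zero
  field_simp

lemma my_phi0_bound : ∃ B : ℝ, 0 < B ∧ ∃ C : ℝ, 0 < C ∧ ∀ z : ℂ, B ≤ z.im →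
    ‖phi0 z‖ ≤ C * Real.exp (-2 * Real.pi * z.im) := by
  have h := my_P_tendsto.1.norm
  have h2 : ∀ᶠ q in 𝓝 (0:ℂ), ‖myP0 q‖ < ‖(518400:ℂ)‖ + 1 := h.eventually_lt_const (by linarith)
  obtain ⟨ε, hε, hb⟩ := Metric.eventually_nhds_iff.mp h2
  have h3 : Tendsto (fun x : ℝ => Real.exp (-2 * Real.pi * x)) atTop (𝓝 0) := by
    apply Real.tendsto_exp_atBot.comp
    apply Tendsto.const_mul_atTop_of_neg _ tendsto_id
    linarith [Real.pi_pos]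
  obtain ⟨B, hB⟩ := eventually_atTop.mp (h3.eventually_lt_const hε)
  refine ⟨max B 1, by positivity, ‖(518400:ℂ)‖ + 1, by positivity, fun z hz => ?_⟩
  have hz1 : 0 < z.im := by linarith [le_max_right B 1]
  have hz2 : B ≤ z.im := by linarith [le_max_left B 1]
  rw [my_phi0q hz1, norm_mul, myq_norm, mul_comm]
  gcongr
  apply le_of_lt
  apply hb
  rw [dist_zero_right, myq_norm]
  exact hB _ hz2

lemma my_phi0_ray : ∃ C : ℝ, 0 < C ∧ ∀ t : ℝ, 1 ≤ t →
    ‖phi0 (Complex.I * t)‖ ≤ C * Real.exp (-2 * Real.pi * t) := by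
  obtain ⟨B, hB, C, hC, h⟩ := my_phi0_bound
  have hc : ContinuousOn (fun t : ℝ => phi0 (Complex.I * t)) (Set.Icc 1 B) := by
    refine my_phi0_diff.continuousOn.comp (by fun_prop) ?_
    intro t ht
    simp
    linarith [ht.1]
  obtain ⟨M, hM⟩ := isCompact_Icc.exists_bound_of_continuousOn hc
  refine ⟨max C (M * Real.exp (2 * Real.pi * B)), lt_max_of_lt_left hC, fun t ht => ?_⟩
  rcases le_or_gt B t with h1 | h1
  · have := h (Complex.I * t) (by simpa using h1)
    simp only [Complex.mul_im, Complex.I_re, Complex.I_im, Complex.ofReal_re, Complex.ofReal_im] at this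
    simp only [zero_mul, one_mul, zero_add] at this
    refine this.trans ?_
    gcongr
    exact le_max_left _ _
  · have h2 := hM t ⟨ht, h1.le⟩
    have hM0 : 0 ≤ M := (norm_nonneg _).trans h2
    calc ‖phi0 (Complex.I * t)‖ ≤ M := h2
      _ ≤ M * Real.exp (2 * Real.pi * B + -2 * Real.pi * t) := by
        apply le_mul_of_one_le_right hM0
        apply Real.one_le_exp
        nlinarith [Real.pi_pos]
      _ = (M * Real.exp (2 * Real.pi * B)) * Real.exp (-2 * Real.pi * t) := by
        rw [Real.exp_add]; ring
      _ ≤ _ := by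
        gcongr
        exact le_max_right _ _

lemma my_f_bound : ∃ δ : ℝ, 0 < δ ∧ ∃ C : ℝ, 0 < C ∧ ∀ w : ℂ, 0 < w.im → w.im < δ →
    |w.re| ≤ w.im → ‖myf w‖ ≤ C * ‖w‖ ^ 2 := by
  obtain ⟨B, hB, C, hC, h⟩ := my_phi0_bound
  refine ⟨1 / (2 * B), by positivity, C, hC, fun w h0 h1 h2 => ?_⟩
  rw [myf, norm_mul, norm_pow]
  gcongr
  have hw : w ≠ 0 := by rintro rfl; simp at h0
  have hn : 0 < Complex.normSq w := Complex.normSq_pos.mpr hw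
  have him : (-1 / w).im = w.im / Complex.normSq w := by
    rw [show -1 / w = -w⁻¹ by rw [neg_div, one_div], Complex.neg_im, Complex.inv_im, neg_div, neg_neg]
  have hB' : B ≤ (-1 / w).im := by
    rw [him, le_div_iff₀ hn, Complex.normSq_apply]
    have h3 : w.re * w.re ≤ w.im * w.im := by
      rw [← sq, ← sq]; exact sq_le_sq' (by linarith [neg_abs_le w.re]) ((le_abs_self _).trans h2)
    rw [lt_div_iff₀ (by positivity)] at h1
    have : B * (w.re * w.re + w.im * w.im) ≤ B * (2 * (w.im * w.im)) := by gcongr; linarith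
    nlinarith
  refine (h _ hB').trans ?_
  apply mul_le_of_le_one_right hC.le
  rw [Real.exp_le_one_iff]
  have := my_S_im h0
  nlinarith [mul_pos Real.pi_pos this]

lemma my_f_zero : myf 0 = 0 := by simp [myf]

/-- continuity along a ray from the cusp -/
lemma my_f_path {v : ℂ} (hv : v.im = 1) (hv2 : |v.re| ≤ 1) :
    ContinuousOn (fun t : ℝ => myf (t * v)) (Set.Icc 0 1) := by
  obtain ⟨δ, hδ, C, hC, hb⟩ := my_f_bound
  intro t ht
  rcases eq_or_lt_of_le ht.1 with h | h
  · subst h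
    have : Tendsto (fun t : ℝ => myf (t * v)) (𝓝[Set.Icc 0 1] 0) (𝓝 0) := by
      have h0 : Tendsto (fun t : ℝ => C * ‖(t:ℂ) * v‖ ^ 2) (𝓝[Set.Icc 0 1] 0) (𝓝 0) := by
        have : Continuous (fun t : ℝ => C * ‖(t:ℂ) * v‖ ^ 2) := by fun_prop
        have h := this.tendsto 0
        simp only [Complex.ofReal_zero, zero_mul, norm_zero, ne_eq, OfNat.ofNat_ne_zero,
          not_false_eq_true, zero_pow, mul_zero] at h
        exact h.mono_left nhdsWithin_le_nhds
      refine squeeze_zero_norm' ?_ h0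
      have h1 : ∀ᶠ t in 𝓝[Set.Icc 0 1] (0:ℝ), t < δ :=
        nhdsWithin_le_nhds (gt_mem_nhds hδ)
      filter_upwards [h1, self_mem_nhdsWithin] with s hs hs2
      rcases eq_or_lt_of_le hs2.1 with h | h
      · subst h; simp [my_f_zero]
      · apply hb
        · simpa [hv] using h
        · simpa [hv] using hs
        · simp [hv, abs_mul, abs_of_pos h]
          nlinarith
    rw [ContinuousWithinAt]
    simpa [my_f_zero] using this
  · apply ContinuousAt.continuousWithinAt
    have h1 : DifferentiableAt ℂ myf (t * v) := my_f_diff.differentiableAt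
      ((isOpen_lt continuous_const Complex.continuous_im).mem_nhds (by simpa [hv] using h))
    exact ContinuousAt.comp (f := fun t : ℝ => (t:ℂ) * v) h1.continuousAt (by fun_prop)

lemma my_seg_lim {v : ℂ} (hv : v.im = 1) (hv2 : |v.re| ≤ 1) {h F : ℂ → ℂ} (hh : Continuous h)
    (hF : ∀ z : ℂ, 0 < z.im → HasDerivAt F (myf z * h z) z) :
    Tendsto (fun ε : ℝ => F v - F (ε * v)) (𝓝[>] 0)
      (𝓝 (v * ∫ t in (0:ℝ)..1, myf (t * v) * h (t * v))) := by
  have hc : ContinuousOn (fun t : ℝ => myf (t * v) * h (t * v)) (Set.Icc 0 1) :=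
    (my_f_path hv hv2).mul (by fun_prop)
  have hi : IntegrableOn (fun t : ℝ => myf (t * v) * h (t * v)) (Set.uIcc 0 1) := by
    rw [Set.uIcc_of_le zero_le_one]
    exact hc.integrableOn_Icc
  have hp := intervalIntegral.continuousOn_primitive_interval_left hi
  have h0 : Tendsto (fun ε : ℝ => ∫ t in ε..1, myf (t * v) * h (t * v)) (𝓝[>] 0)
      (𝓝 (∫ t in (0:ℝ)..1, myf (t * v) * h (t * v))) := by
    have h1 := hp 0 (by simp)
    rw [Set.uIcc_of_le zero_le_one] at h1
    have h2 : 𝓝[>] (0:ℝ) ≤ 𝓝[Set.Icc 0 1] 0 := by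
      rw [← nhdsWithin_Ioc_eq_nhdsGT zero_lt_one]
      exact nhdsWithin_mono _ Set.Ioc_subset_Icc_self
    exact h1.tendsto.mono_left h2
  refine (h0.const_mul v).congr' ?_
  have : Set.Ioc (0:ℝ) 1 ∈ 𝓝[>] (0:ℝ) := Ioc_mem_nhdsGT zero_lt_one
  filter_upwards [this] with ε hε
  rw [← intervalIntegral.integral_const_mul]
  have key := intervalIntegral.integral_eq_sub_of_hasDerivAt (a := ε) (b := 1)
    (f := fun t : ℝ => F (t * v)) (f' := fun t : ℝ => v * (myf (t * v) * h (t * v))) ?_ ?_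
  · rw [key]; simp
  · intro t ht
    rw [Set.uIcc_of_le hε.2] at ht
    have ht0 : 0 < t := hε.1.trans_le ht.1
    have h1 := hF (t * v) (by simpa [hv] using ht0)
    have h2 : HasDerivAt (fun t : ℝ => (t:ℂ) * v) v t := by
      simpa using (Complex.ofRealCLM.hasDerivAt (x := t)).mul_const v
    have h3 := HasDerivAt.comp (h₂ := F) t h1 h2
    rw [mul_comm] at h3
    exact h3
  · apply ContinuousOn.intervalIntegrable
    rw [Set.uIcc_of_le hε.2]
    exact (hc.mono (Set.Icc_subset_Icc hε.1.le le_rfl)).const_smul v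

lemma my_horiz_lim {v : ℂ} (hv : v.im = 1) (hv2 : |v.re| ≤ 1) {h F : ℂ → ℂ} (hh : Continuous h)
    (hF : ∀ z : ℂ, 0 < z.im → HasDerivAt F (myf z * h z) z) :
    Tendsto (fun ε : ℝ => F (ε * v) - F (ε * Complex.I)) (𝓝[>] 0) (𝓝 0) := by
  obtain ⟨δ, hδ, C, hC, hb⟩ := my_f_bound
  obtain ⟨M, hM⟩ := (isCompact_closedBall (0:ℂ) 2).exists_bound_of_continuousOn hh.continuousOn
  have hM0 : 0 ≤ M := (norm_nonneg _).trans (hM 0 (by simp))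
  have h0 : Tendsto (fun ε : ℝ => (C * 2 ^ 2 * M) * ‖(ε:ℂ) * v - ε * Complex.I‖) (𝓝[>] 0) (𝓝 0) := by
    have : Continuous (fun ε : ℝ => (C * 2 ^ 2 * M) * ‖(ε:ℂ) * v - ε * Complex.I‖) := by fun_prop
    have h := this.tendsto 0
    simp only [Complex.ofReal_zero, zero_mul, sub_zero, norm_zero, mul_zero] at h
    exact h.mono_left nhdsWithin_le_nhds
  refine squeeze_zero_norm' ?_ h0
  have h1 : ∀ᶠ t in 𝓝[>] (0:ℝ), t < δ := nhdsWithin_le_nhds (gt_mem_nhds hδ)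
  have h2 : ∀ᶠ t in 𝓝[>] (0:ℝ), t < 1 := nhdsWithin_le_nhds (gt_mem_nhds one_pos)
  filter_upwards [h1, h2, self_mem_nhdsWithin] with ε h1 h2 h3
  have h3 : 0 < ε := h3
  let s : Set ℂ := {w | w.im = ε ∧ w.re ∈ Set.Icc (-ε) ε}
  have hs : Convex ℝ s := by
    have a : Convex ℝ {w : ℂ | w.im = ε} := (convex_singleton ε).linear_preimage Complex.imLm
    have b : Convex ℝ {w : ℂ | w.re ∈ Set.Icc (-ε) ε} :=
      (convex_Icc (-ε) ε).linear_preimage Complex.reLm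
    exact a.inter b
  refine hs.norm_image_sub_le_of_norm_hasDerivWithin_le (f' := fun z => myf z * h z) 
    (fun w hw => (hF w (by rw [hw.1]; exact h3)).hasDerivWithinAt) ?_ ?_ ?_
  · intro w hw
    have hn : ‖w‖ ≤ 2 := by
      have := Complex.norm_le_abs_re_add_abs_im w
      have hr : |w.re| ≤ ε := abs_le.mpr hw.2
      rw [hw.1, abs_of_pos h3] at this
      linarith
    rw [norm_mul]
    have a := hb w (by rw [hw.1]; exact h3) (by rw [hw.1]; exact h1)
      (by rw [hw.1]; exact abs_le.mpr hw.2)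
    have b := hM w (by simpa using hn)
    have : C * ‖w‖ ^ 2 ≤ C * 2 ^ 2 := by gcongr
    exact mul_le_mul (a.trans this) b (norm_nonneg _) (by positivity)
  · simp [s, h3.le]
  · have := abs_le.mp hv2
    refine ⟨by simp [hv], ?_, ?_⟩
    · simp; nlinarith
    · simp; nlinarith

end

section
open scoped Topology
open Filter MeasureTheory

/-- The contour combination for a general weight function. -/
noncomputable def myA (g : ℂ → ℂ) : ℂ :=
  segInt (-1) Complex.I (fun z => phi0 (-1/(z+1)) * (z+1)^2 * g z)
    + segInt 1 Complex.I (fun z => phi0 (-1/(z-1)) * (z-1)^2 * g z)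
    - 2 * segInt 0 Complex.I (fun z => phi0 (-1/z) * z^2 * g z)
    + 2 * rayIntFrom 1 (fun z => phi0 z * g z)

lemma my_seg1 (g : ℂ → ℂ) : segInt (-1) Complex.I (fun z => phi0 (-1/(z+1)) * (z+1)^2 * g z) =
    (Complex.I + 1) * ∫ t in (0:ℝ)..1, myf (t * (Complex.I + 1)) * g (t * (Complex.I + 1) - 1) := by
  rw [segInt, sub_neg_eq_add]
  refine congrArg _ (intervalIntegral.integral_congr fun t _ => ?_)
  rw [show -1 + (t:ℂ) * (Complex.I + 1) + 1 = t * (Complex.I + 1) by ring,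
    show -1 + (t:ℂ) * (Complex.I + 1) = t * (Complex.I + 1) - 1 by ring, myf]

lemma my_seg2 (g : ℂ → ℂ) : segInt 1 Complex.I (fun z => phi0 (-1/(z-1)) * (z-1)^2 * g z) =
    (Complex.I - 1) * ∫ t in (0:ℝ)..1, myf (t * (Complex.I - 1)) * g (t * (Complex.I - 1) + 1) := by
  rw [segInt]
  refine congrArg _ (intervalIntegral.integral_congr fun t _ => ?_)
  rw [show 1 + (t:ℂ) * (Complex.I - 1) - 1 = t * (Complex.I - 1) by ring,
    show 1 + (t:ℂ) * (Complex.I - 1) = t * (Complex.I - 1) + 1 by ring, myf]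

lemma my_seg3 (g : ℂ → ℂ) : segInt 0 Complex.I (fun z => phi0 (-1/z) * z^2 * g z) =
    Complex.I * ∫ t in (0:ℝ)..1, myf (t * Complex.I) * g (t * Complex.I) := by
  rw [segInt]
  simp only [sub_zero, zero_add, myf]

lemma my_phi0_I_cont : ContinuousOn (fun t : ℝ => phi0 (Complex.I * t)) (Set.Ioi 0) := by
  refine my_phi0_diff.continuousOn.comp (by fun_prop) ?_
  intro t ht
  simpa using ht

lemma my_ray_int {g : ℂ → ℂ} (hg : Continuous g)
    (hb : ∃ M : ℝ, ∀ t : ℝ, 1 ≤ t → ‖g (Complex.I * t)‖ ≤ M * t) :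
    IntegrableOn (fun t : ℝ => phi0 (Complex.I * t) * g (Complex.I * t)) (Set.Ioi 1) := by
  obtain ⟨M, hM⟩ := hb
  obtain ⟨C, hC, hC2⟩ := my_phi0_ray
  have h1 : IntegrableOn (fun t : ℝ => (C * M) * Real.exp (-1 * t)) (Set.Ioi 1) :=
    (exp_neg_integrableOn_Ioi 1 one_pos).const_mul _
  refine Integrable.mono' h1 ?_ ?_
  · apply ContinuousOn.aestronglyMeasurable _ measurableSet_Ioi
    refine (my_phi0_I_cont.mono (Set.Ioi_subset_Ioi zero_le_one)).mul ?_
    fun_prop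
  · refine (ae_restrict_iff' measurableSet_Ioi).mpr (ae_of_all _ fun t ht => ?_)
    have ht : 1 < t := ht
    have a := hC2 t ht.le
    have b := hM t ht.le
    have hM0 : 0 ≤ M := by
      have := (norm_nonneg _).trans b
      by_contra h
      nlinarith
    have h3 : t * Real.exp (-2 * Real.pi * t) ≤ Real.exp (-1 * t) := by
      calc t * Real.exp (-2 * Real.pi * t) ≤ Real.exp t * Real.exp (-2 * Real.pi * t) := by
            gcongr
            linarith [Real.add_one_le_exp t]
        _ = Real.exp (t + -2 * Real.pi * t) := (Real.exp_add _ _).symm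
        _ ≤ _ := by
          apply Real.exp_le_exp.mpr
          nlinarith [Real.pi_gt_three]
    rw [norm_mul]
    calc _ ≤ (C * Real.exp (-2 * Real.pi * t)) * (M * t) := by gcongr
      _ = (C * M) * (t * Real.exp (-2 * Real.pi * t)) := by ring
      _ ≤ _ := by gcongr

theorem my_A_eq {g : ℂ → ℂ} (hg : Differentiable ℂ g) (hg2 : ∀ z, g (z + 1) + g (z - 1) = 2 * g z)
    (hb : ∃ M : ℝ, ∀ t : ℝ, 1 ≤ t → ‖g (Complex.I * t)‖ ≤ M * t) {c : ℂ}
    (hlim : Tendsto (fun T : ℝ => ∫ t in (0:ℝ)..1,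
      (myf (Complex.I * T + t) * g (Complex.I * T + t - 1)
        - myf (Complex.I * T + t - 1) * g (Complex.I * T + t))) atTop (𝓝 c)) :
    myA g = c := by
  have hc := hg.continuous
  obtain ⟨F, hF⟩ := my_prim (f := fun w => myf w * g (w - 1)) (my_f_diff.mul (by fun_prop))
  obtain ⟨K, hK⟩ := my_prim (f := fun w => myf w * g w) (my_f_diff.mul (by fun_prop))
  let G : ℂ → ℂ := fun w => 2 * K w - F w
  have hG : ∀ z : ℂ, 0 < z.im → HasDerivAt G (myf z * g (z + 1)) z := by
    intro z hz
    have := ((hK z hz).const_mul 2).sub (hF z hz)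
    convert! this using 1
    linear_combination myf z * hg2 z
  have l1 := my_seg_lim (v := Complex.I + 1) (by simp) (by simp) (h := fun w => g (w - 1))
    (by fun_prop) hF
  have l2 := my_seg_lim (v := Complex.I - 1) (by simp) (by simp) (h := fun w => g (w + 1))
    (by fun_prop) hG
  have l3 := my_seg_lim (v := Complex.I) (by simp) (by simp) (h := g) hc hK
  have m1 := my_horiz_lim (v := Complex.I + 1) (by simp) (by simp) (h := fun w => g (w - 1))
    (by fun_prop) hF
  have m2 := my_horiz_lim (v := Complex.I - 1) (by simp) (by simp) (h := fun w => g (w + 1))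
    (by fun_prop) hG
  have s1 : segInt (-1) Complex.I (fun z => phi0 (-1/(z+1)) * (z+1)^2 * g z)
      + segInt 1 Complex.I (fun z => phi0 (-1/(z-1)) * (z-1)^2 * g z)
      - 2 * segInt 0 Complex.I (fun z => phi0 (-1/z) * z^2 * g z) =
      F (Complex.I + 1) + G (Complex.I - 1) - 2 * K Complex.I := by
    rw [my_seg1, my_seg2, my_seg3]
    refine tendsto_nhds_unique ((l1.add l2).sub (l3.const_mul 2)) ?_
    have := (m1.add m2).const_sub (F (Complex.I + 1) + G (Complex.I - 1) - 2 * K Complex.I)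
    rw [add_zero, sub_zero] at this
    refine this.congr fun ε => ?_
    simp only [G]
    ring
  -- the vertical part
  let P : ℝ → ℂ := fun T => F (Complex.I * T + 1) + G (Complex.I * T - 1) - 2 * K (Complex.I * T)
  have hP : ∀ T : ℝ, 0 < T →
      HasDerivAt P (2 * Complex.I * (phi0 (Complex.I * T) * g (Complex.I * T))) T := by
    intro T hT
    have h0 : HasDerivAt (fun t : ℝ => Complex.I * (t:ℂ)) Complex.I T := by
      simpa using (Complex.ofRealCLM.hasDerivAt (x := T)).const_mul Complex.I
    have e1 := (hF (Complex.I * T + 1) (by simpa using hT)).comp T (h0.add_const 1)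
    have e2 := (hG (Complex.I * T - 1) (by simpa using hT)).comp T (h0.sub_const 1)
    have e3 := (hK (Complex.I * T) (by simpa using hT)).comp T h0
    have := (e1.add e2).sub (e3.const_mul 2)
    convert! this using 1
    have k := my_f_second (w := Complex.I * T) (by simpa using hT)
    simp only [add_sub_cancel_right, sub_add_cancel]
    linear_combination (-Complex.I * g (Complex.I * T)) * k
  have hPlim : Tendsto P atTop (𝓝 c) := by
    refine hlim.congr' ?_
    filter_upwards [eventually_gt_atTop 0] with T hT
    have key := intervalIntegral.integral_eq_sub_of_hasDerivAt (a := 0) (b := 1)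
      (f := fun t : ℝ => F (Complex.I * T + t) - G (Complex.I * T + t - 1))
      (f' := fun t : ℝ => (myf (Complex.I * T + t) * g (Complex.I * T + t - 1)
        - myf (Complex.I * T + t - 1) * g (Complex.I * T + t))) ?_ ?_
    · rw [key]
      simp only [P, G, Complex.ofReal_zero, Complex.ofReal_one, add_zero, add_sub_cancel_right]
      ring
    · intro t _
      have h0 : HasDerivAt (fun t : ℝ => Complex.I * T + (t:ℂ)) 1 t := by
        simpa using (Complex.ofRealCLM.hasDerivAt (x := t)).const_add (Complex.I * T)
      have e1 := (hF (Complex.I * T + t) (by simpa using hT)).comp t h0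
      have e2 := (hG (Complex.I * T + t - 1) (by simpa using hT)).comp t (h0.sub_const 1)
      have := e1.sub e2
      convert! this using 1
      simp
    · apply ContinuousOn.intervalIntegrable
      have hm : ContinuousOn myf {z | 0 < z.im} := my_f_diff.continuousOn
      have a : ContinuousOn (fun t : ℝ => myf (Complex.I * T + t)) (Set.uIcc 0 1) :=
        hm.comp (by fun_prop) (fun t _ => by simpa using hT)
      have b : ContinuousOn (fun t : ℝ => myf (Complex.I * T + t - 1)) (Set.uIcc 0 1) :=
        hm.comp (by fun_prop) (fun t _ => by simpa using hT)
      exact (a.mul (by fun_prop)).sub (b.mul (by fun_prop))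
  have hint := integral_Ioi_of_hasDerivAt_of_tendsto (a := 1) (f := P)
    (hP 1 one_pos).continuousAt.continuousWithinAt
    (fun T hT => hP T (lt_trans one_pos hT)) ((my_ray_int hc hb).const_mul _) hPlim
  rw [integral_const_mul] at hint
  rw [myA, s1, rayIntFrom]
  simp only [P, Complex.ofReal_one, mul_one] at hint
  linear_combination hint

lemma my_param {μ : Measure ℝ} {ψ γ : ℝ → ℂ} (hγ : Continuous γ) (him : ∀ᵐ t ∂μ, 0 ≤ (γ t).im)
    (h1 : Integrable ψ μ) (h2 : Integrable (fun t => ψ t * γ t) μ) :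
    HasDerivAt (fun r : ℝ => ∫ t, ψ t * Complex.exp ((Real.pi:ℂ) * Complex.I * (r:ℂ)^2 * γ t) ∂μ)
      (∫ t, ψ t * (2 * Real.pi * Complex.I * (Real.sqrt 2 : ℝ) * γ t * myq (γ t)) ∂μ)
      (Real.sqrt 2) := by
  have hs2 : ((Real.sqrt 2 : ℝ) : ℂ) ^ 2 = 2 := by
    rw [← Complex.ofReal_pow, Real.sq_sqrt (by norm_num)]; norm_num
  have hexp : ∀ r : ℝ, ∀ z : ℂ, 0 ≤ z.im →
      ‖Complex.exp ((Real.pi:ℂ) * Complex.I * (r:ℂ)^2 * z)‖ ≤ 1 := by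
    intro r z hz
    rw [Complex.norm_exp, Real.exp_le_one_iff]
    have : ((Real.pi:ℂ) * Complex.I * (r:ℂ)^2 * z).re = -(Real.pi * r ^ 2 * z.im) := by
      rw [← Complex.ofReal_pow]
      generalize r ^ 2 = s
      simp
    rw [this]
    have := Real.pi_pos
    have : 0 ≤ Real.pi * r ^ 2 * z.im := by positivity
    linarith
  have key := hasDerivAt_integral_of_dominated_loc_of_deriv_le (μ := μ) (𝕜 := ℝ)
    (F := fun (r : ℝ) t => ψ t * Complex.exp ((Real.pi:ℂ) * Complex.I * (r:ℂ)^2 * γ t))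
    (F' := fun (r : ℝ) t => ψ t * (2 * Real.pi * Complex.I * r * γ t *
      Complex.exp ((Real.pi:ℂ) * Complex.I * (r:ℂ)^2 * γ t)))
    (x₀ := Real.sqrt 2) (s := Set.Icc 0 3) (bound := fun t => 2 * Real.pi * 3 * ‖ψ t * γ t‖)
    ?_ ?_ ?_ ?_ ?_ ?_ ?_
  · convert! key.2 using 5 with t
    rw [hs2, myq]
    congr 2
    ring
  · apply Icc_mem_nhds
    · positivity
    · rw [Real.sqrt_lt' (by norm_num)]; norm_num
  · refine Eventually.of_forall fun r => h1.aestronglyMeasurable.mul ?_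
    exact Continuous.aestronglyMeasurable (by fun_prop)
  · refine Integrable.mono h1 (h1.aestronglyMeasurable.mul
      (Continuous.aestronglyMeasurable (by fun_prop))) ?_
    filter_upwards [him] with t ht
    rw [norm_mul]
    exact mul_le_of_le_one_right (norm_nonneg _) (hexp _ _ ht)
  · exact h1.aestronglyMeasurable.mul (Continuous.aestronglyMeasurable (by fun_prop))
  · filter_upwards [him] with t ht r hr
    have e := hexp r _ ht
    have hp := Real.pi_pos
    have e2 : ‖(2 * Real.pi * Complex.I * r : ℂ)‖ ≤ 2 * Real.pi * 3 := by
      simp only [norm_mul, Complex.norm_real, Complex.norm_I, mul_one, Complex.norm_ofNat,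
        Real.norm_of_nonneg hp.le, Real.norm_of_nonneg hr.1]
      have := hr.2
      gcongr
    calc _ = ‖(2 * Real.pi * Complex.I * r : ℂ)‖ * ‖ψ t * γ t‖ *
          ‖Complex.exp ((Real.pi:ℂ) * Complex.I * (r:ℂ)^2 * γ t)‖ := by
          rw [← norm_mul, ← norm_mul]; congr 1; ring
      _ ≤ (2 * Real.pi * 3) * ‖ψ t * γ t‖ * 1 := by gcongr
      _ = _ := mul_one _
  · exact (h2.norm).const_mul _
  · refine ae_of_all _ fun t r hr => ?_
    apply HasDerivAt.const_mul
    have a : HasDerivAt (fun r : ℝ => (r:ℂ) ^ 2) (2 * r) r := by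
      simpa using (hasDerivAt_pow 2 (r:ℂ)).comp_ofReal
    have b := ((a.const_mul ((Real.pi:ℂ) * Complex.I)).mul_const (γ t)).cexp
    convert! b using 1
    ring

lemma my_seg_param {a b : ℂ} (ha : a.im = 0) (hb : b.im = 1) {ψ : ℂ → ℂ}
    (h : ContinuousOn (fun t : ℝ => ψ (a + t * (b - a))) (Set.Icc 0 1)) :
    HasDerivAt (fun r : ℝ => segInt a b
      (fun z => ψ z * Complex.exp ((Real.pi:ℂ) * Complex.I * (r:ℂ)^2 * z)))
      (segInt a b (fun z => ψ z * (2 * Real.pi * Complex.I * (Real.sqrt 2 : ℝ) * z * myq z)))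
      (Real.sqrt 2) := by
  simp only [segInt, intervalIntegral.integral_of_le zero_le_one]
  apply HasDerivAt.const_mul
  have hsub : ∀ φ : ℝ → ℂ, ContinuousOn φ (Set.Icc 0 1) → Integrable φ (volume.restrict (Set.Ioc 0 1)) :=
    fun φ hφ => (hφ.integrableOn_Icc).mono_set Set.Ioc_subset_Icc_self
  refine my_param (μ := volume.restrict (Set.Ioc 0 1)) (ψ := fun t : ℝ => ψ (a + t * (b - a)))
    (γ := fun t : ℝ => a + t * (b - a)) (by fun_prop) ?_ (hsub _ h) (hsub _ (h.mul (by fun_prop)))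
  refine (ae_restrict_iff' measurableSet_Ioc).mpr (ae_of_all _ fun t ht => ?_)
  simp [ha, hb, ht.1.le]

theorem my_aRad_deriv : HasDerivAt aRad
    (myA (fun z => 2 * Real.pi * Complex.I * (Real.sqrt 2 : ℝ) * z * myq z)) (Real.sqrt 2) := by
  have c1 : ContinuousOn (fun t : ℝ => (fun z : ℂ => phi0 (-1/(z+1)) * (z+1)^2)
      (-1 + t * (Complex.I - -1))) (Set.Icc 0 1) := by
    refine (my_f_path (v := Complex.I + 1) (by simp) (by simp)).congr fun t _ => ?_
    simp only [myf]
    rw [show -1 + (t:ℂ) * (Complex.I - -1) + 1 = t * (Complex.I + 1) by ring]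
  have c2 : ContinuousOn (fun t : ℝ => (fun z : ℂ => phi0 (-1/(z-1)) * (z-1)^2)
      (1 + t * (Complex.I - 1))) (Set.Icc 0 1) := by
    refine (my_f_path (v := Complex.I - 1) (by simp) (by simp)).congr fun t _ => ?_
    simp only [myf]
    rw [show 1 + (t:ℂ) * (Complex.I - 1) - 1 = t * (Complex.I - 1) by ring]
  have c3 : ContinuousOn (fun t : ℝ => (fun z : ℂ => phi0 (-1/z) * z^2)
      (0 + t * (Complex.I - 0))) (Set.Icc 0 1) := by
    refine (my_f_path (v := Complex.I) (by simp) (by simp)).congr fun t _ => ?_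
    simp only [myf, zero_add, sub_zero]
  have d1 := my_seg_param (a := -1) (b := Complex.I) (ψ := fun z : ℂ => phi0 (-1/(z+1)) * (z+1)^2) (by simp) (by simp) c1
  have d2 := my_seg_param (a := 1) (b := Complex.I) (ψ := fun z : ℂ => phi0 (-1/(z-1)) * (z-1)^2) (by simp) (by simp) c2
  have d3 := my_seg_param (a := 0) (b := Complex.I) (ψ := fun z : ℂ => phi0 (-1/z) * z^2) (by simp) (by simp) c3
  have i1 : Integrable (fun t : ℝ => phi0 (Complex.I * t)) (volume.restrict (Set.Ioi 1)) := by
    have := my_ray_int (g := fun _ => 1) (by fun_prop) ⟨1, fun t ht => by simpa using ht⟩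
    simp only [mul_one] at this
    exact this
  have i2 : Integrable (fun t : ℝ => phi0 (Complex.I * t) * (Complex.I * t))
      (volume.restrict (Set.Ioi 1)) :=
    my_ray_int (g := fun z => z) (by fun_prop)
      ⟨1, fun t ht => by simp [abs_of_pos (one_pos.trans_le ht)]⟩
  have d4 := (my_param (μ := volume.restrict (Set.Ioi 1)) (ψ := fun t : ℝ => phi0 (Complex.I * t))
    (γ := fun t : ℝ => Complex.I * t) (by fun_prop)
    ((ae_restrict_iff' measurableSet_Ioi).mpr (ae_of_all _ fun t ht => by
      have : (1:ℝ) < t := ht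
      simp; linarith)) i1 i2).const_mul Complex.I
  exact ((d1.add d2).sub (d3.const_mul 2)).add (d4.const_mul 2)

end

section
open scoped Topology
open Filter MeasureTheory

/-- Going up in the vertical strip. -/
def myL : Filter ℂ := comap Complex.im atTop ⊓ 𝓟 {w | 0 ≤ w.re ∧ w.re ≤ 1}

lemma my_L_pos : ∀ᶠ w in myL, 0 < w.im :=
  (tendsto_comap.eventually (eventually_gt_atTop (0:ℝ))).filter_mono inf_le_left

lemma my_L_re : ∀ᶠ w in myL, 0 ≤ w.re ∧ w.re ≤ 1 :=
  (eventually_principal.mpr fun _ h => h).filter_mono inf_le_right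

lemma my_L_im : Tendsto Complex.im myL atTop := tendsto_comap.mono_left inf_le_left

lemma my_L_q : Tendsto myq myL (𝓝 0) := by
  rw [tendsto_zero_iff_norm_tendsto_zero]
  simp only [myq_norm]
  refine Real.tendsto_exp_atBot.comp ?_
  exact my_L_im.const_mul_atTop_of_neg (by have := Real.pi_pos; linarith)

lemma my_L_wq : Tendsto (fun w => w * myq w) myL (𝓝 0) := by
  have h1 : Tendsto (fun y : ℝ => 2 * (y ^ 1 * Real.exp (-y))) atTop (𝓝 0) := by
    simpa using (Real.tendsto_pow_mul_exp_neg_atTop_nhds_zero 1).const_mul 2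
  refine squeeze_zero_norm' ?_ (h1.comp my_L_im)
  filter_upwards [my_L_re, my_L_im.eventually (eventually_ge_atTop 1)] with w hr hi
  rw [norm_mul, myq_norm]
  have a : ‖w‖ ≤ 2 * w.im := by
    have := Complex.norm_le_abs_re_add_abs_im w
    rw [abs_of_nonneg hr.1, abs_of_nonneg (by linarith)] at this
    linarith
  have b : Real.exp (-2 * Real.pi * w.im) ≤ Real.exp (-w.im) := by
    apply Real.exp_le_exp.mpr
    nlinarith [Real.pi_gt_three]
  calc _ ≤ (2 * w.im) * Real.exp (-w.im) := by gcongr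
    _ = _ := by simp only [Function.comp]; ring

lemma my_L_int {Φ : ℂ → ℂ} {c : ℂ} (h : Tendsto Φ myL (𝓝 c))
    (hc : ContinuousOn Φ {z | 0 < z.im}) :
    Tendsto (fun T : ℝ => ∫ t in (0:ℝ)..1, Φ (Complex.I * T + t)) atTop (𝓝 c) := by
  rw [Metric.tendsto_nhds]
  intro ε hε
  have h2 : ∀ᶠ w in myL, dist (Φ w) c < ε / 2 := (Metric.tendsto_nhds.mp h) _ (half_pos hε)
  rw [myL, eventually_inf_principal, eventually_comap] at h2
  filter_upwards [h2, eventually_gt_atTop 0] with T hT hT0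
  have hi : IntervalIntegrable (fun t : ℝ => Φ (Complex.I * T + t)) volume 0 1 := by
    apply ContinuousOn.intervalIntegrable
    exact hc.comp (by fun_prop) (fun t _ => by simpa using hT0)
  have e : (∫ t in (0:ℝ)..1, Φ (Complex.I * T + t)) - c
      = ∫ t in (0:ℝ)..1, (Φ (Complex.I * T + t) - c) := by
    rw [intervalIntegral.integral_sub hi (by simp)]
    simp
  rw [dist_eq_norm, e]
  have := intervalIntegral.norm_integral_le_of_norm_le_const (a := 0) (b := 1) (C := ε / 2)
    (f := fun t : ℝ => Φ (Complex.I * T + t) - c) ?_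
  · refine this.trans_lt ?_
    norm_num
    linarith
  · intro t ht
    rw [Set.uIoc_of_le zero_le_one] at ht
    have := hT (Complex.I * T + t) (by simp) (by simpa using ⟨ht.1.le, ht.2⟩)
    rw [dist_eq_norm] at this
    exact this.le

lemma my_cont_aux {g : ℂ → ℂ} (hg : Continuous g) :
    ContinuousOn (fun w => myf w * g (w - 1) - myf (w - 1) * g w) {z | 0 < z.im} := by
  have hm : ContinuousOn myf {z | 0 < z.im} := my_f_diff.continuousOn
  have hm2 : ContinuousOn (fun w => myf (w - 1)) {z | 0 < z.im} :=
    hm.comp (by fun_prop) (fun t (ht : 0 < t.im) => by simpa using ht)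
  exact (hm.mul (by fun_prop)).sub (hm2.mul (by fun_prop))

lemma my_L_sub : Tendsto (fun w => myf w - myf (w - 1)) myL
    (𝓝 (-8640 * Complex.I / (Real.pi : ℂ))) := by
  obtain ⟨p0, p2, p4⟩ := my_P_tendsto
  have a0 := p0.comp my_L_q
  have a2 := p2.comp my_L_q
  have := (((my_L_wq.const_mul 2).sub my_L_q).mul a0).sub
    (a2.const_mul (12 * Complex.I / Real.pi))
  convert! this.congr' ?_ using 2
  · ring
  · filter_upwards [my_L_pos] with w hw
    rw [my_f_sub hw, my_phi0q hw, my_phim2q hw]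
    simp only [Function.comp]
    ring

lemma my_L_qf : Tendsto (fun w => myq w * myf w) myL (𝓝 (- (36 / (Real.pi : ℂ) ^ 2))) := by
  obtain ⟨p0, p2, p4⟩ := my_P_tendsto
  have a0 := p0.comp my_L_q
  have a2 := p2.comp my_L_q
  have a4 := p4.comp my_L_q
  have := (((my_L_wq.pow 2).mul a0).sub ((my_L_wq.mul a2).const_mul (12 * Complex.I / Real.pi))).sub
    (a4.const_mul (36 / (Real.pi : ℂ) ^ 2))
  convert! this.congr' ?_ using 2
  · ring
  · filter_upwards [my_L_pos] with w hw
    rw [my_f_eq hw]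
    simp only [Function.comp]
    rw [← my_phim4q hw, my_phi0q hw, my_phim2q hw]
    ring

lemma my_A_one : myA (fun _ => 1) = -8640 * Complex.I / (Real.pi : ℂ) := by
  refine my_A_eq (by fun_prop) (fun z => by norm_num) ⟨1, fun t ht => by simpa using ht⟩ ?_
  exact my_L_int (Φ := fun w => myf w * 1 - myf (w - 1) * 1) (by simpa using my_L_sub)
    (my_cont_aux (g := fun _ => 1) (by fun_prop))

lemma my_q_le {t : ℝ} (ht : 1 ≤ t) : ‖myq (Complex.I * t)‖ ≤ 1 := by
  have := myq_mem (z := Complex.I * t) (by simp; linarith)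
  rw [mem_ball_zero_iff] at this
  exact this.le

lemma my_A_q : myA myq = 0 := by
  refine my_A_eq myq_diff (fun z => by rw [myq_add_one, myq_sub_one]; ring)
    ⟨1, fun t ht => by linarith [my_q_le ht]⟩ ?_
  refine my_L_int (Φ := fun w => myf w * myq (w - 1) - myf (w - 1) * myq w) ?_
    (my_cont_aux myq_diff.continuous)
  have := my_L_q.mul my_L_sub
  rw [zero_mul] at this
  refine this.congr fun w => ?_
  rw [myq_sub_one]; ring

lemma my_A_zq (c : ℂ) : myA (fun z => c * z * myq z) = c * (36 / (Real.pi : ℂ) ^ 2) := by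
  have hq := myq_diff
  refine my_A_eq (by fun_prop) (fun z => by rw [myq_add_one, myq_sub_one]; ring)
    ⟨‖c‖, fun t ht => ?_⟩ ?_
  · rw [norm_mul, norm_mul, norm_mul, Complex.norm_I, one_mul, Complex.norm_real,
      Real.norm_of_nonneg (by linarith)]
    exact mul_le_of_le_one_right (by positivity) (my_q_le ht)
  refine my_L_int
    (Φ := fun w => myf w * (c * (w - 1) * myq (w - 1)) - myf (w - 1) * (c * w * myq w)) ?_
    (my_cont_aux (g := fun z => c * z * myq z) (by have := hq.continuous; fun_prop))
  have := ((my_L_wq.mul my_L_sub).sub my_L_qf).const_mul c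
  convert! this.congr fun w => ?_ using 2
  · ring
  · rw [myq_sub_one]; ring


end

/-- **Proposition 4.** Special values of the radial function `a`:
`a(0) = −8640i/π`, `a(√2) = 0`, and `a′(√2) = 72√2·i/π`. -/
theorem aRad_special_values :
    aRad 0 = -8640 * Complex.I / (Real.pi : ℂ) ∧
    aRad (Real.sqrt 2) = 0 ∧
    deriv aRad (Real.sqrt 2) = 72 * (Real.sqrt 2 : ℂ) * Complex.I / (Real.pi : ℂ) := by
  have hs2 : ((Real.sqrt 2 : ℝ) : ℂ) ^ 2 = 2 := by
    rw [← Complex.ofReal_pow, Real.sq_sqrt (by norm_num)]; norm_num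
  refine ⟨?_, ?_, ?_⟩
  · rw [← my_A_one, aRad, myA]
    simp
  · have e : ∀ z : ℂ, Complex.exp ((Real.pi:ℂ) * Complex.I * ((Real.sqrt 2 : ℝ):ℂ)^2 * z)
        = myq z := by
      intro z
      rw [hs2, myq]
      congr 1
      ring
    rw [← my_A_q, aRad, myA]
    simp only [e]
  · rw [my_aRad_deriv.deriv, my_A_zq]
    have : (Real.pi : ℂ) ≠ 0 := by exact_mod_cast Real.pi_ne_zero
    field_simp
    ring
end

section
/- Let h = 128(θ00⁴ + θ01⁴)/θ10⁸ on the upper half-plane ℍ. Then h is holomorphic on ℍ and, for every matrix (a b; c d) ∈ SL₂(ℤ) with c ≡ 0 (mod 2), h((az+b)/(cz+d)) = (cz+d)^{−2} h(z) for all z ∈ ℍ; i.e., h is modular of weight −2 for Γ0(2). -/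
open MeasureTheory

/-- The theta constant `θ00`. -/
noncomputable def theta00 (z : ℂ) : ℂ :=
  ∑' n : ℤ, Complex.exp ((Real.pi : ℂ) * Complex.I * (n : ℂ) ^ 2 * z)

/-- The theta constant `θ01`. -/
noncomputable def theta01 (z : ℂ) : ℂ :=
  ∑' n : ℤ, (-1 : ℂ) ^ n * Complex.exp ((Real.pi : ℂ) * Complex.I * (n : ℂ) ^ 2 * z)

/-- The theta constant `θ10`. -/
noncomputable def theta10 (z : ℂ) : ℂ :=
  ∑' n : ℤ, Complex.exp ((Real.pi : ℂ) * Complex.I * ((n : ℂ) + 1/2) ^ 2 * z)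

/-- `ψ_I = 128(θ00⁴+θ01⁴)/θ10⁸ + 128(θ01⁴−θ10⁴)/θ00⁸`. -/
noncomputable def psiI (z : ℂ) : ℂ :=
  128 * (theta00 z ^ 4 + theta01 z ^ 4) / theta10 z ^ 8 +
    128 * (theta01 z ^ 4 - theta10 z ^ 4) / theta00 z ^ 8

/-- `ψ_T = 128(θ00⁴+θ01⁴)/θ10⁸ + 128(θ00⁴+θ10⁴)/θ01⁸`. -/
noncomputable def psiT (z : ℂ) : ℂ :=
  128 * (theta00 z ^ 4 + theta01 z ^ 4) / theta10 z ^ 8 +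
    128 * (theta00 z ^ 4 + theta10 z ^ 4) / theta01 z ^ 8

/-- `ψ_S = −128(θ00⁴+θ10⁴)/θ01⁸ − 128(θ10⁴−θ01⁴)/θ00⁸`. -/
noncomputable def psiS (z : ℂ) : ℂ :=
  -128 * (theta00 z ^ 4 + theta10 z ^ 4) / theta01 z ^ 8 -
    128 * (theta10 z ^ 4 - theta01 z ^ 4) / theta00 z ^ 8

/-- The weakly holomorphic modular form `h = 128(θ00⁴ + θ01⁴)/θ10⁸`. -/
noncomputable def hFn (z : ℂ) : ℂ := 128 * (theta00 z ^ 4 + theta01 z ^ 4) / theta10 z ^ 8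

open Complex ModularGroup
open UpperHalfPlane hiding I
open scoped MatrixGroups ModularForm

lemma th00_eq (z : ℂ) : theta00 z = jacobiTheta₂ 0 z := by
  simp [theta00, jacobiTheta₂, jacobiTheta₂_term]

lemma negone_zpow (n : ℤ) : (-1 : ℂ) ^ n = cexp (Real.pi * I * n) := by
  rw [← Complex.exp_pi_mul_I, ← Complex.exp_int_mul]
  congr 1; ring

lemma th01_eq (z : ℂ) : theta01 z = jacobiTheta₂ (1/2) z := by
  unfold theta01 jacobiTheta₂ jacobiTheta₂_term
  congr 1; ext n
  rw [negone_zpow, ← Complex.exp_add]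
  congr 1; ring

lemma th10_term (z : ℂ) (n : ℤ) :
    cexp ((Real.pi : ℂ) * I * ((n : ℂ) + 1/2) ^ 2 * z) =
      cexp (Real.pi * I * z / 4) * jacobiTheta₂_term n (z/2) z := by
  unfold jacobiTheta₂_term
  rw [← Complex.exp_add]
  congr 1; ring

lemma th10_eq (z : ℂ) : theta10 z = cexp (Real.pi * I * z / 4) * jacobiTheta₂ (z/2) z := by
  unfold theta10 jacobiTheta₂
  simp_rw [th10_term]
  rw [tsum_mul_left]

lemma exp_sq_int (n : ℤ) : cexp (Real.pi * I * (n:ℂ) ^ 2) = (-1 : ℂ) ^ n := by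
  have h : Real.pi * I * (n:ℂ) ^ 2 = ((n^2 : ℤ) : ℂ) * (Real.pi * I) := by push_cast; ring
  rw [h, Complex.exp_int_mul, Complex.exp_pi_mul_I]
  rcases Int.even_or_odd n with hn | hn
  · rw [hn.neg_one_zpow, (hn.pow_of_ne_zero two_ne_zero).neg_one_zpow]
  · rw [hn.neg_one_zpow, hn.pow.neg_one_zpow]

lemma th00_T (z : ℂ) : theta00 (z + 1) = theta01 z := by
  unfold theta00 theta01
  congr 1; ext n
  rw [← exp_sq_int, ← Complex.exp_add]
  congr 1; ring

lemma th01_T (z : ℂ) : theta01 (z + 1) = theta00 z := by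
  unfold theta00 theta01
  congr 1; ext n
  rw [mul_add, mul_one, Complex.exp_add, exp_sq_int, mul_left_comm, ← mul_zpow]
  norm_num

lemma th10_T (z : ℂ) : theta10 (z + 1) = cexp (Real.pi * I / 4) * theta10 z := by
  unfold theta10
  rw [← tsum_mul_left]
  congr 1; ext n
  have h : cexp (Real.pi * I * (n^2 + n)) = 1 := by
    rw [mul_add, Complex.exp_add, exp_sq_int, ← negone_zpow, ← mul_zpow]
    norm_num
  calc _ = cexp (Real.pi * I / 4) * cexp (Real.pi * I * ((n:ℂ) + 1/2)^2 * z) * cexp (Real.pi * I * (n^2 + n)) := by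
        rw [← Complex.exp_add, ← Complex.exp_add]; congr 1; ring
    _ = _ := by rw [h, mul_one]

lemma cpow_ne {z : ℂ} (hz : z ≠ 0) : (-I * z) ^ (1/2 : ℂ) ≠ 0 := by
  rw [Complex.cpow_ne_zero_iff]
  left
  simp [hz]

lemma th00_S {z : ℂ} (hz : z ≠ 0) : theta00 (-1 / z) = (-I * z) ^ (1/2 : ℂ) * theta00 z := by
  have h := cpow_ne hz
  rw [th00_eq, th00_eq, jacobiTheta₂_functional_equation 0 z]
  simp only [zero_div, ne_eq, OfNat.ofNat_ne_zero, not_false_eq_true, zero_pow, mul_zero, Complex.exp_zero]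
  field_simp

lemma th10_S {z : ℂ} (hz : z ≠ 0) : theta10 (-1 / z) = (-I * z) ^ (1/2 : ℂ) * theta01 z := by
  have h := cpow_ne hz
  rw [th10_eq, th01_eq, jacobiTheta₂_functional_equation (1/2) z]
  have h1 : -1 / z / 2 = -(1/2/z) := by ring
  have h2 : Real.pi * I * (-1/z) / 4 = -Real.pi * I * (1/2)^2 / z := by ring
  rw [h1, jacobiTheta₂_neg_left, h2, ← mul_assoc, ← mul_assoc, mul_one_div_cancel h, one_mul]

lemma th01_S {z : ℂ} (hz : z ≠ 0) : theta01 (-1 / z) = (-I * z) ^ (1/2 : ℂ) * theta10 z := by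
  have h := cpow_ne hz
  rw [th10_eq, th01_eq, jacobiTheta₂_functional_equation (z/2) z]
  have h1 : z / 2 / z = 1/2 := by field_simp
  have h2 : -Real.pi * I * (z/2)^2 / z = -(Real.pi * I * z / 4) := by field_simp; ring
  rw [h1, h2, Complex.exp_neg]
  have := Complex.exp_ne_zero (Real.pi * I * z / 4)
  field_simp

lemma cpow_four (z : ℂ) : ((-I * z) ^ (1/2 : ℂ)) ^ 4 = - z ^ 2 := by
  have h : ((-I * z) ^ (1/2 : ℂ)) ^ 2 = -I * z := by
    have := Complex.cpow_nat_inv_pow (-I * z) (n := 2) two_ne_zero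
    simpa using this
  calc _ = (((-I * z) ^ (1/2 : ℂ)) ^ 2) ^ 2 := by ring
    _ = _ := by rw [h, mul_pow, neg_sq, I_sq]; ring

noncomputable def f1 (z : ℍ) : ℂ := hFn z
noncomputable def f2 (z : ℍ) : ℂ := -(128 * (theta00 z ^ 4 + theta10 z ^ 4) / theta01 z ^ 8)
noncomputable def f3 (z : ℍ) : ℂ := -(128 * (theta01 z ^ 4 - theta10 z ^ 4) / theta00 z ^ 8)

lemma S_coe (z : ℍ) : ((S • z : ℍ) : ℂ) = -1 / z := by
  rw [UpperHalfPlane.coe_specialLinearGroup_apply]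
  simp [coe_S]
lemma T_coe (z : ℍ) : ((T • z : ℍ) : ℂ) = z + 1 := by
  rw [UpperHalfPlane.coe_specialLinearGroup_apply]
  simp [coe_T]

lemma slash_S (f : ℍ → ℂ) (z : ℍ) : (f ∣[(-2 : ℤ)] S) z = f (S • z) * (z:ℂ)^2 := by
  rw [ModularForm.SL_slash_apply]
  simp [denom, coe_S]
lemma slash_T (f : ℍ → ℂ) (z : ℍ) : (f ∣[(-2 : ℤ)] T) z = f (T • z) := by
  rw [ModularForm.SL_slash_apply]
  simp [denom, coe_T]

lemma p8 (a : ℂ) : a ^ 8 = (a^4)^2 := by ring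

lemma f1_S : f1 ∣[(-2 : ℤ)] S = f2 := by
  ext z
  have hz := z.ne_zero
  rw [slash_S, f1, f2, S_coe, hFn, p8, th00_S hz, th01_S hz, th10_S hz]
  simp only [mul_pow, cpow_four, p8]
  field_simp
  ring
lemma f2_S : f2 ∣[(-2 : ℤ)] S = f1 := by
  ext z
  have hz := z.ne_zero
  rw [slash_S, f1, f2, S_coe, hFn, p8, th00_S hz, th01_S hz, th10_S hz]
  simp only [mul_pow, cpow_four, p8]
  field_simp
  ring
lemma f3_S : f3 ∣[(-2 : ℤ)] S = f3 := by
  ext z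
  have hz := z.ne_zero
  rw [slash_S, f3, f3, S_coe, p8, th00_S hz, th01_S hz, th10_S hz]
  simp only [mul_pow, cpow_four, p8]
  field_simp
  ring
lemma e4 : cexp (Real.pi * I / 4) ^ 4 = -1 := by
  rw [← Complex.exp_nat_mul, ← Complex.exp_pi_mul_I]
  congr 1; push_cast; ring
lemma f1_T : f1 ∣[(-2 : ℤ)] T = f1 := by
  ext z
  rw [slash_T, f1, f1, T_coe, hFn, hFn, p8, th00_T, th01_T, th10_T]
  simp only [mul_pow, e4, p8]
  ring
lemma f2_T : f2 ∣[(-2 : ℤ)] T = f3 := by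
  ext z
  rw [slash_T, f2, f3, T_coe, p8, th00_T, th01_T, th10_T]
  simp only [mul_pow, e4, p8]
  ring
lemma f3_T : f3 ∣[(-2 : ℤ)] T = f2 := by
  ext z
  rw [slash_T, f2, f3, T_coe, p8, th00_T, th01_T, th10_T]
  simp only [mul_pow, e4, p8]
  ring

lemma slash_inv_of {f g : ℍ → ℂ} {A : SL(2, ℤ)} (h : f ∣[(-2 : ℤ)] A = g) :
    g ∣[(-2 : ℤ)] A⁻¹ = f := by
  rw [← h, ← SlashAction.slash_mul, mul_inv_cancel, SlashAction.slash_one]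

def Q (g : SL(2, ℤ)) : Prop :=
  (Even (g 1 0) ∧ Odd (g 1 1) ∧ f1 ∣[(-2 : ℤ)] g = f1) ∨
  (Odd (g 1 0) ∧ Even (g 1 1) ∧ f1 ∣[(-2 : ℤ)] g = f2) ∨
  (Odd (g 1 0) ∧ Odd (g 1 1) ∧ f1 ∣[(-2 : ℤ)] g = f3)

lemma Q_all (g : SL(2, ℤ)) : Q g := by
  have hg : g ∈ Subgroup.closure {S, T} := by simp [SpecialLinearGroup.SL2Z_generators]
  induction hg using Subgroup.closure_induction_right with
  | one => left; simp
  | mul_right x hx y hy ih =>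
    simp only [Set.mem_insert_iff, Set.mem_singleton_iff] at hy
    unfold Q at ih ⊢
    simp only [SlashAction.slash_mul]
    rcases hy with rfl | rfl
    · have e0 : (x * S) 1 0 = x 1 1 := by simp [Matrix.mul_apply, coe_S]
      have e1 : (x * S) 1 1 = -x 1 0 := by simp [Matrix.mul_apply, coe_S]
      rw [e0, e1]
      rcases ih with ⟨h, h', h2⟩ | ⟨h, h', h2⟩ | ⟨h, h', h2⟩ <;> rw [h2]
      · right; left; exact ⟨h', h.neg, f1_S⟩
      · left; exact ⟨h', h.neg, f2_S⟩
      · right; right; exact ⟨h', h.neg, f3_S⟩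
    · have e0 : (x * T) 1 0 = x 1 0 := by simp [Matrix.mul_apply, coe_T]
      have e1 : (x * T) 1 1 = x 1 0 + x 1 1 := by simp [Matrix.mul_apply, coe_T]
      rw [e0, e1]
      rcases ih with ⟨h, h', h2⟩ | ⟨h, h', h2⟩ | ⟨h, h', h2⟩ <;> rw [h2]
      · left; exact ⟨h, h.add_odd h', f1_T⟩
      · right; right; exact ⟨h, h.add_even h', f2_T⟩
      · right; left; exact ⟨h, h.add_odd h', f3_T⟩
  | mul_inv_cancel x hx y hy ih =>
    simp only [Set.mem_insert_iff, Set.mem_singleton_iff] at hy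
    unfold Q at ih ⊢
    simp only [SlashAction.slash_mul]
    rcases hy with rfl | rfl
    · have e0 : (x * S⁻¹) 1 0 = -x 1 1 := by
        simp [Matrix.mul_apply, coe_S, Matrix.adjugate_fin_two]
      have e1 : (x * S⁻¹) 1 1 = x 1 0 := by
        simp [Matrix.mul_apply, coe_S, Matrix.adjugate_fin_two]
      rw [e0, e1]
      rcases ih with ⟨h, h', h2⟩ | ⟨h, h', h2⟩ | ⟨h, h', h2⟩ <;> rw [h2]
      · right; left; exact ⟨h'.neg, h, slash_inv_of f2_S⟩
      · left; exact ⟨h'.neg, h, slash_inv_of f1_S⟩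
      · right; right; exact ⟨h'.neg, h, slash_inv_of f3_S⟩
    · have e0 : (x * T⁻¹) 1 0 = x 1 0 := by
        simp [Matrix.mul_apply, coe_T, Matrix.adjugate_fin_two]
      have e1 : (x * T⁻¹) 1 1 = x 1 1 - x 1 0 := by
        simp [Matrix.mul_apply, coe_T, Matrix.adjugate_fin_two]; ring
      rw [e0, e1]
      rcases ih with ⟨h, h', h2⟩ | ⟨h, h', h2⟩ | ⟨h, h', h2⟩ <;> rw [h2]
      · left; exact ⟨h, h'.sub_even h, slash_inv_of f1_T⟩
      · right; right; exact ⟨h, h'.sub_odd h, slash_inv_of f3_T⟩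
      · right; left; exact ⟨h, h'.sub_odd h, slash_inv_of f2_T⟩

noncomputable def PP (z : ℍ) : ℂ := theta00 z * theta01 z * theta10 z

lemma PP_S (z : ℍ) : PP (S • z) = 0 ↔ PP z = 0 := by
  have hz := z.ne_zero
  have h := cpow_ne hz
  unfold PP
  rw [S_coe, th00_S hz, th01_S hz, th10_S hz]
  simp only [mul_eq_zero, h, false_or]
  tauto
lemma PP_T (z : ℍ) : PP (T • z) = 0 ↔ PP z = 0 := by
  unfold PP
  rw [T_coe, th00_T, th01_T, th10_T]
  simp only [mul_eq_zero, Complex.exp_ne_zero, false_or]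
  tauto

lemma PP_all (g : SL(2, ℤ)) : ∀ z : ℍ, PP (g • z) = 0 ↔ PP z = 0 := by
  have hg : g ∈ Subgroup.closure {S, T} := by simp [SpecialLinearGroup.SL2Z_generators]
  induction hg using Subgroup.closure_induction with
  | mem x hx =>
    simp only [Set.mem_insert_iff, Set.mem_singleton_iff] at hx
    rcases hx with rfl | rfl
    · exact PP_S
    · exact PP_T
  | one => simp
  | mul x y _ _ hx hy => intro z; rw [mul_smul, hx, hy]
  | inv x _ hx => intro z; rw [← hx, smul_inv_smul]

lemma q_lt {z : ℂ} (hz : 4/5 ≤ z.im) : Real.exp (-Real.pi * z.im) < 1/3 := by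
  have h1 : 3 < Real.exp (Real.pi * z.im) := by
    have := Real.add_one_le_exp (Real.pi * z.im)
    nlinarith [Real.pi_gt_three]
  rw [neg_mul, Real.exp_neg, one_div]
  exact inv_strictAnti₀ (by norm_num) h1

lemma th00_ne {z : ℂ} (hz : 4/5 ≤ z.im) : theta00 z ≠ 0 := by
  intro h0
  have h := norm_jacobiTheta_sub_one_le (τ := z) (by linarith)
  have : jacobiTheta z = 0 := h0
  rw [this, zero_sub, norm_neg, norm_one] at h
  have hq := q_lt hz
  rw [div_mul_eq_mul_div, le_div_iff₀ (by linarith)] at h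
  linarith

lemma th01_ne {z : ℂ} (hz : 4/5 ≤ z.im) : theta01 z ≠ 0 := by
  rw [← th00_T]; exact th00_ne (by simpa using hz)

lemma th10_ne {z : ℂ} (hz : 4/5 ≤ z.im) : theta10 z ≠ 0 := by
  intro h0
  have hq := q_lt hz
  have hqpos := Real.exp_pos (-Real.pi * z.im)
  set q := Real.exp (-Real.pi * z.im) with hqdef
  let t : ℤ → ℂ := fun n => cexp ((Real.pi : ℂ) * I * ((n : ℂ) + 1/2) ^ 2 * z)
  have hs : Summable t := by
    have := (hasSum_jacobiTheta₂_term (z/2) (τ := z) (by linarith)).summable.mul_left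
      (cexp (Real.pi * I * z / 4))
    refine this.congr fun n => ?_
    exact (th10_term z n).symm
  have hsN : Summable fun n : ℕ => t n := hs.comp_injective Nat.cast_injective
  have hsym : ∀ n : ℕ, t (-(n + 1)) = t n := by
    intro n
    simp only [t]
    congr 1; push_cast; ring
  have hsum : theta10 z = 2 * ∑' n : ℕ, t n := by
    have := tsum_of_nat_of_neg_add_one (f := t) hsN (by simpa only [hsym] using hsN)
    simp only [hsym] at this
    rw [two_mul]; exact this
  rw [h0, hsN.tsum_eq_zero_add] at hsum
  have hb : ∀ n : ℕ, ‖t n‖ ≤ ‖t 0‖ * q ^ n := by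
    intro n
    simp only [t, Complex.norm_exp, hqdef, ← Real.exp_nat_mul, ← Real.exp_add]
    apply Real.exp_le_exp.mpr
    have key : ∀ m : ℤ, ((Real.pi : ℂ) * I * ((m : ℂ) + 1/2) ^ 2 * z).re
        = -Real.pi * z.im * ((m:ℝ) + 1/2)^2 := by
      intro m
      rw [show (Real.pi : ℂ) * I * ((m : ℂ) + 1/2) ^ 2 * z
        = ((Real.pi * ((m:ℝ)+1/2)^2 : ℝ) : ℂ) * (z * I) by push_cast; ring,
        re_ofReal_mul, mul_I_re]
      ring
    rw [key, key]
    push_cast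
    have : 0 ≤ Real.pi * z.im * (n:ℝ)^2 := by
      have := Real.pi_pos
      have : 0 ≤ z.im := by linarith
      positivity
    nlinarith
  have ht0 : 0 < ‖t 0‖ := by simp only [t]; exact norm_pos_iff.mpr (Complex.exp_ne_zero _)
  have hg : HasSum (fun n : ℕ => ‖t 0‖ * q ^ (n+1)) (‖t 0‖ * (q * (1 - q)⁻¹)) := by
    have := ((hasSum_geometric_of_lt_one hqpos.le (by linarith : q < 1)).mul_left q).mul_left ‖t 0‖
    simpa only [pow_succ'] using this
  have hn := tsum_of_norm_bounded hg (f := fun n : ℕ => t ((n + 1 : ℕ) : ℤ)) (fun n => hb (n+1))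
  have he : t 0 = - ∑' n : ℕ, t ((n + 1 : ℕ) : ℤ) := by
    have h2 : t ((0:ℕ):ℤ) + ∑' n : ℕ, t ((n + 1 : ℕ) : ℤ) = 0 := by
      simpa using hsum.symm
    exact eq_neg_of_add_eq_zero_left h2
  have he' : ‖t 0‖ = ‖∑' n : ℕ, t ((n + 1 : ℕ) : ℤ)‖ := by
    conv_lhs => rw [he, norm_neg]
  rw [← he'] at hn
  have : q * (1-q)⁻¹ < 1 := by
    rw [← div_eq_mul_inv, div_lt_one (by linarith)]; linarith
  nlinarith

lemma PP_ne (z : ℍ) : PP z ≠ 0 := by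
  obtain ⟨g, hg⟩ := exists_smul_mem_fd z
  rw [Ne, ← PP_all g]
  have h3 := three_le_four_mul_im_sq_of_mem_fd hg
  have hpos := (g • z).im_pos
  have h : 4/5 ≤ ((g • z : ℍ) : ℂ).im := by
    change 4/5 ≤ (g • z).im
    nlinarith
  exact mul_ne_zero (mul_ne_zero (th00_ne h) (th01_ne h)) (th10_ne h)

lemma th10_ne_zero {z : ℂ} (hz : 0 < z.im) : theta10 z ≠ 0 :=
  right_ne_zero_of_mul (PP_ne ⟨z, hz⟩)

lemma hFn_diff : DifferentiableOn ℂ hFn {z : ℂ | 0 < z.im} := by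
  intro z hz
  have hz : 0 < z.im := hz
  apply DifferentiableAt.differentiableWithinAt
  have d0 : DifferentiableAt ℂ theta00 z := by
    rw [show theta00 = jacobiTheta₂ 0 from funext th00_eq]
    exact differentiableAt_jacobiTheta₂_snd 0 hz
  have d1 : DifferentiableAt ℂ theta01 z := by
    rw [show theta01 = jacobiTheta₂ (1/2) from funext th01_eq]
    exact differentiableAt_jacobiTheta₂_snd _ hz
  have d2 : DifferentiableAt ℂ theta10 z := by
    rw [show theta10 = fun z => cexp (Real.pi * I * z / 4) * jacobiTheta₂ (z/2) z from funext th10_eq]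
    refine DifferentiableAt.mul (by fun_prop) ?_
    have h := (hasFDerivAt_jacobiTheta₂ (z/2) hz).differentiableAt
    exact DifferentiableAt.comp z (f := fun z : ℂ => (z/2, z)) h (by fun_prop)
  unfold hFn
  exact ((((d0.pow 4).add (d1.pow 4)).const_mul 128)).div (d2.pow 8) (pow_ne_zero 8 (th10_ne_zero hz))

/-- `h = 128(θ00⁴ + θ01⁴)/θ10⁸` is holomorphic on the upper half-plane and is modular of
weight `−2` for `Γ₀(2)`: for every `(a b; c d) ∈ SL₂(ℤ)` with `c ≡ 0 (mod 2)`,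
`h((az+b)/(cz+d)) = (cz+d)^{−2} h(z)`. -/
theorem hFn_modular_weight_neg_two :
    DifferentiableOn ℂ hFn {z : ℂ | 0 < z.im} ∧
    ∀ M : Matrix (Fin 2) (Fin 2) ℤ, M.det = 1 → (2 : ℤ) ∣ M 1 0 →
      ∀ z : ℂ, 0 < z.im →
        hFn (((M 0 0 : ℂ) * z + (M 0 1 : ℂ)) / ((M 1 0 : ℂ) * z + (M 1 1 : ℂ))) =
          ((M 1 0 : ℂ) * z + (M 1 1 : ℂ)) ^ (-2 : ℤ) * hFn z := by
  refine ⟨hFn_diff, ?_⟩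
  intro M hdet h2 z hz
  let g : SL(2, ℤ) := ⟨M, hdet⟩
  let w : ℍ := ⟨z, hz⟩
  have hQ := Q_all g
  have he : Even (g 1 0) := (even_iff_two_dvd).mpr h2
  rcases hQ with ⟨_, _, h⟩ | ⟨h, _⟩ | ⟨h, _⟩
  · have h1 := congrFun h w
    rw [ModularForm.SL_slash_apply] at h1
    have hd : denom g w = (M 1 0 : ℂ) * z + (M 1 1 : ℂ) := by
      rw [ModularGroup.denom_apply]
    have hne : (M 1 0 : ℂ) * z + (M 1 1 : ℂ) ≠ 0 := by
      rw [← hd]; exact denom_ne_zero _ _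
    have hc : ((g • w : ℍ) : ℂ) = ((M 0 0 : ℂ) * z + (M 0 1 : ℂ)) / ((M 1 0 : ℂ) * z + (M 1 1 : ℂ)) := by
      rw [UpperHalfPlane.coe_specialLinearGroup_apply]
      simp [g, w]
    rw [f1, hc, hd] at h1
    have h3 : f1 w = hFn z := rfl
    rw [h3] at h1
    rw [← h1, mul_left_comm, ← zpow_add₀ hne]
    simp
  · exact absurd he (Int.not_even_iff_odd.mpr h)
  · exact absurd he (Int.not_even_iff_odd.mpr h)
end
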